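/- arXiv:math/0510011 — 5 statements merged into one kernel-verified Lean document; each statement's English description precedes it below -/
import Mathlib

section
/- Let Γ be a finite connected simple graph (in the notation below) with n := h_1(Γ) ≥ 1 and with exactly 2n edges (a logarithmically divergent graph). Fix a linear isomorphism φ : ℝ^n → ker ∂_ℝ ⊆ ℝ^E and for each edge e ∈ E let ℓ_e : ℝ^n → ℝ be the composite of φ with the e-th coordinate functional on ℝ^E. For x = (x^{(1)},x^{(2)},x^{(3)},x^{(4)}) ∈ (ℝ^n)^4, identified with ℝ^{4n} carrying Lebesgue measure, set q_e(x) := ∑_{j=1}^{4} ℓ_e(x^{(j)})². Then the lower Lebesgue integral ∫⁻_{{x ∈ ℝ^{4n} : 1 ≤ ‖x‖ ≤ 2}} (∏_{e∈E} ENNReal.ofReal(q_e(x)))⁻¹ dx is finite if and only if Γ is primitive log divergent, i.e., every nonempty proper subset S ⊊ E satisfies #S > 2·h_1(S). -/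
open MeasureTheory

open scoped BigOperators

variable {V : Type} [Fintype V] [LinearOrder V]

/-- The incidence sign of a vertex `v` in an edge `e` of a graph whose vertices are
linearly ordered and whose edges are oriented from the smaller to the larger
endpoint: `+1` if `v` is the larger endpoint, `-1` if `v` is the smaller endpoint,
`0` otherwise. -/
def incSign (R : Type) [CommRing R] (v : V) (e : Sym2 V) : R :=
  (if v = Sym2.sup e then 1 else 0) - (if v = Sym2.inf e then 1 else 0)

/-- The incidence (boundary) map `∂_R : R^E → R^V` of a finite graph `G`, sending the
basis vector of an edge `e = {u,v}` with `u < v` to `1_v − 1_u`. -/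
noncomputable def boundary (R : Type) [CommRing R] (G : SimpleGraph V)
    [Fintype G.edgeSet] : (G.edgeSet → R) →ₗ[R] (V → R) :=
  Matrix.mulVecLin (Matrix.of fun (v : V) (e : G.edgeSet) => incSign R v e.1)

/-- The submodule of `R^E` spanned by the basis vectors of the edges in `S`,
i.e. the functions on the edges of `G` vanishing outside of `S`. -/
def supportedIn (R : Type) [Field R] (G : SimpleGraph V) [Fintype G.edgeSet]
    (S : Set (Sym2 V)) : Submodule R (G.edgeSet → R) where
  carrier := {f | ∀ e : G.edgeSet, (e : Sym2 V) ∉ S → f e = 0}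
  add_mem' := by
    intro f g hf hg e he
    simp only [Pi.add_apply, hf e he, hg e he, add_zero]
  zero_mem' := by
    intro e he
    rfl
  smul_mem' := by
    intro c f hf e he
    simp only [Pi.smul_apply, hf e he, smul_zero]

/-- `h_1(S)` for a set `S` of edges of `G`: the dimension over `ℚ` of the kernel of
the boundary map restricted to the span of the basis vectors of the edges in `S`. -/
noncomputable def h1S (G : SimpleGraph V) [Fintype G.edgeSet] (S : Set (Sym2 V)) : ℕ :=
  Module.finrank ℚ ↥(LinearMap.ker (boundary ℚ G) ⊓ supportedIn ℚ G S)

/-!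
The forms `ℓ_e` span the dual of the space `W` of loop momenta, and the integrand blows up only
along the common zeros of subsets `T` of them, a subspace of codimension `4 · rk T` on which
`∏ q_e` vanishes to order `2 · #T`. If `2 · #T ≥ 4 · rk T` for some `T` whose zero locus is not
`0`, then the integral already diverges near a point of that locus.

Conversely, suppose `2 · #T < 4 · rk T` for all such `T`, hence `2 · #T ≤ c · rk T` for a single
`c < 4`. At a point `x` of the annulus, choose a basis `B` of the dual among the `ℓ_e` greedily, in
order of increasing `|ℓ_e(x)|`. Then `B` meets every sublevel set of `e ↦ |ℓ_e(x)|` in `rk`-many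
elements, so Abel summation bounds the integrand by a constant times `∏_{e ∈ B} |ℓ_e(x)| ^ (-c)`.
In the coordinates given by `B` this is a product of locally integrable functions, and there are
only finitely many `B`.

The edges `S` outside `T` satisfy `rk T + h₁(S) = h₁(Γ)`, which turns these conditions on `T` into
those on `S` when `2 · #E = 4 · h₁(Γ)`.
-/

/-! ### Greedy bases -/

section Greedy

variable {K M ι : Type*} [DivisionRing K] [AddCommGroup M] [Module K M]

theorem exists_linearIndepOn_forall_superlevel_subset_span {α : Type*} [LinearOrder α]
    (v : ι → M) (a : ι → α) (s : Finset ι) :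
    ∃ B ⊆ s, LinearIndepOn K v (B : Set ι) ∧
      ∀ t, v '' {i | i ∈ s ∧ t ≤ a i} ⊆ Submodule.span K (v '' {i | i ∈ B ∧ t ≤ a i}) := by
  classical
  induction s using Finset.induction_on_min_value a with
  | empty => exact ⟨∅, by simp, by simp, by simp⟩
  | insert i s _ hmin ih =>
    obtain ⟨B, hBs, hB, hspan⟩ := ih
    by_cases hi : v i ∈ Submodule.span K (v '' (B : Set ι))
    · refine ⟨B, hBs.trans (Finset.subset_insert _ _), hB, fun t => ?_⟩
      rintro _ ⟨k, ⟨hk, htk⟩, rfl⟩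
      rcases Finset.mem_insert.1 hk with rfl | hk
      · refine Submodule.span_mono (Set.image_mono fun b hb => ?_) hi
        exact ⟨hb, htk.trans (hmin b (hBs hb))⟩
      · exact hspan t ⟨k, ⟨hk, htk⟩, rfl⟩
    · refine ⟨insert i B, Finset.insert_subset_insert _ hBs, ?_, fun t => ?_⟩
      · simpa only [Finset.coe_insert] using hB.insert hi
      · rintro _ ⟨k, ⟨hk, htk⟩, rfl⟩
        rcases Finset.mem_insert.1 hk with rfl | hk
        · exact Submodule.subset_span ⟨k, ⟨Finset.mem_insert_self _ _, htk⟩, rfl⟩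
        · refine Submodule.span_mono (Set.image_mono fun b hb => ?_) (hspan t ⟨k, ⟨hk, htk⟩, rfl⟩)
          exact ⟨Finset.mem_insert_of_mem hb.1, hb.2⟩

theorem sum_mul_nonpos_of_forall_superlevel (s : Finset ι) {w a : ι → ℝ} (ha : ∀ i ∈ s, 0 ≤ a i)
    (h : ∀ t > 0, ∑ i ∈ s with t ≤ a i, w i ≤ 0) : ∑ i ∈ s, w i * a i ≤ 0 := by
  classical
  induction s using Finset.strongInduction generalizing a with
  | H s ih =>
    rcases s.eq_empty_or_nonempty with rfl | hs
    · simp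
    obtain ⟨k, hk, hmin⟩ := s.exists_min_image a hs
    have hbottom : a k * ∑ i ∈ s, w i ≤ 0 := by
      rcases (ha k hk).eq_or_lt with hak | hak
      · simp [← hak]
      · have hsum := h (a k) hak
        rw [Finset.filter_true_of_mem hmin] at hsum
        exact mul_nonpos_of_nonneg_of_nonpos hak.le hsum
    have htop : ∑ i ∈ s.erase k, w i * (a i - a k) ≤ 0 := by
      refine ih _ (Finset.erase_ssubset hk)
        (fun i hi => sub_nonneg.2 (hmin i (Finset.mem_of_mem_erase hi))) fun t ht => ?_
      convert h (t + a k) (add_pos_of_pos_of_nonneg ht (ha k hk)) using 2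
      ext i
      simp only [Finset.mem_filter, Finset.mem_erase, le_sub_iff_add_le]
      refine ⟨fun hi => ⟨hi.1.2, hi.2⟩, fun hi => ⟨⟨?_, hi.1⟩, hi.2⟩⟩
      rintro rfl
      linarith [hi.2]
    rw [Finset.sum_erase _ (by simp)] at htop
    calc ∑ i ∈ s, w i * a i = ∑ i ∈ s, w i * (a i - a k) + a k * ∑ i ∈ s, w i := by
          rw [Finset.mul_sum, ← Finset.sum_add_distrib]
          exact Finset.sum_congr rfl fun i _ => by ring
      _ ≤ 0 := add_nonpos htop hbottom

variable [Fintype ι]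

theorem exists_linearIndepOn_sum_mul_le {c : ℝ} (hc : 0 ≤ c) (v : ι → M) (w : ι → ℝ) {a : ι → ℝ}
    (ha : ∀ i, 0 ≤ a i)
    (h : ∀ t > 0, ∑ i with t ≤ a i, w i ≤ c * Set.finrank K (v '' {i | t ≤ a i})) :
    ∃ B : Finset ι, LinearIndepOn K v (B : Set ι) ∧
      Submodule.span K (v '' B) = Submodule.span K (Set.range v) ∧
      ∑ i, w i * a i ≤ c * ∑ i ∈ B, a i := by
  classical
  obtain ⟨B, -, hB, hspan⟩ :=
    exists_linearIndepOn_forall_superlevel_subset_span (K := K) v a Finset.univ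
  simp only [Finset.mem_univ, true_and] at hspan
  refine ⟨B, hB, (Submodule.span_mono (Set.image_subset_range _ _)).antisymm ?_, ?_⟩
  · rw [Submodule.span_le]
    simpa [ha] using hspan 0
  have hrank (t : ℝ) : Set.finrank K (v '' {i | t ≤ a i}) ≤ (B.filter (t ≤ a ·)).card := by
    calc Set.finrank K (v '' {i | t ≤ a i})
        ≤ Set.finrank K (((B.filter (t ≤ a ·)).image v : Finset M) : Set M) := by
          refine Submodule.finrank_mono (Submodule.span_le.2 ?_)
          simpa only [Finset.coe_image, Finset.coe_filter] using hspan t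
      _ ≤ ((B.filter (t ≤ a ·)).image v).card := finrank_span_finset_le_card _
      _ ≤ (B.filter (t ≤ a ·)).card := Finset.card_image_le
  have hsum : ∑ i, (w i - if i ∈ B then c else 0) * a i ≤ 0 := by
    refine sum_mul_nonpos_of_forall_superlevel _ (fun i _ => ha i) fun t ht => ?_
    have hB_sum : ∑ i with t ≤ a i, (if i ∈ B then c else 0) =
        c * (B.filter (t ≤ a ·)).card := by
      rw [← Finset.sum_filter, Finset.filter_filter, Finset.sum_const, nsmul_eq_mul, mul_comm]
      congr 3
      ext i
      simp [and_comm]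
    rw [Finset.sum_sub_distrib, hB_sum, sub_nonpos]
    exact (h t ht).trans (mul_le_mul_of_nonneg_left (Nat.cast_le.2 (hrank t)) hc)
  simpa [sub_mul, Finset.sum_sub_distrib, ite_mul, Finset.mul_sum] using hsum

theorem exists_linearIndepOn_prod_rpow_le {c : ℝ} (hc : 0 ≤ c) (v : ι → M) (w : ι → ℝ) {z : ι → ℝ}
    (hz : ∀ i, 1 ≤ z i)
    (h : ∀ t > 1, ∑ i with t ≤ z i, w i ≤ c * Set.finrank K (v '' {i | t ≤ z i})) :
    ∃ B : Finset ι, LinearIndepOn K v (B : Set ι) ∧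
      Submodule.span K (v '' B) = Submodule.span K (Set.range v) ∧
      ∏ i, z i ^ w i ≤ ∏ i ∈ B, z i ^ c := by
  have hz0 (i : ι) : 0 < z i := one_pos.trans_le (hz i)
  have hprod (s : Finset ι) (u : ι → ℝ) :
      ∏ i ∈ s, z i ^ u i = Real.exp (∑ i ∈ s, u i * Real.log (z i)) := by
    rw [Real.exp_sum]
    exact Finset.prod_congr rfl fun i _ => by rw [Real.rpow_def_of_pos (hz0 i), mul_comm]
  obtain ⟨B, hB, hspan, hle⟩ := exists_linearIndepOn_sum_mul_le hc v w
    (fun i => Real.log_nonneg (hz i)) fun t ht => by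
      simpa only [Real.le_log_iff_exp_le (hz0 _)] using h (Real.exp t) (Real.one_lt_exp_iff.2 ht)
  refine ⟨B, hB, hspan, ?_⟩
  rw [hprod, hprod, ← Finset.mul_sum]
  exact Real.exp_le_exp.2 hle

end Greedy

section LinearForms

open Filter Topology

variable {E J W : Type*}

theorem ker_pi_compLeft_eq_bot {k : Type*} [Field k] [AddCommGroup W] [Module k W]
    {l : E → Module.Dual k W} (hl : Submodule.span k (Set.range l) = ⊤) :
    LinearMap.ker (LinearMap.pi fun e => (l e).compLeft J) = ⊥ := by
  refine LinearMap.ker_eq_bot'.2 fun x hx => funext fun j => ?_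
  refine (Module.forall_dual_apply_eq_zero_iff k (x j)).1 fun f => ?_
  have hspan : Submodule.span k (Set.range l) ≤ LinearMap.ker (Module.Dual.eval k W (x j)) := by
    rw [Submodule.span_le]
    rintro _ ⟨e, rfl⟩
    exact congrFun (congrFun hx e) j
  exact hspan (hl ▸ Submodule.mem_top : f ∈ Submodule.span k (Set.range l))

variable [Finite E] [Fintype J] [NormedAddCommGroup W] [NormedSpace ℝ W] [FiniteDimensional ℝ W]

theorem eventually_exists_mem_le_norm_compLeft (l : E → Module.Dual ℝ W) {r : ℝ}
    (hr : 0 < r) {T : Set E} (hT : Submodule.span ℝ (l '' T) = ⊤) :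
    ∀ᶠ η in 𝓝[>] (0 : ℝ), ∀ x : J → W, r ≤ ‖x‖ → ∃ e ∈ T, η ≤ ‖(l e).compLeft J x‖ := by
  have := Fintype.ofFinite T
  rw [Set.image_eq_range] at hT
  obtain ⟨C, hC, hanti⟩ := LinearMap.exists_antilipschitzWith
    (LinearMap.pi fun e : T => (l e).compLeft J) (ker_pi_compLeft_eq_bot hT)
  filter_upwards [Ioo_mem_nhdsGT (div_pos hr (NNReal.coe_pos.2 hC))] with η ⟨hη, hηr⟩ x hx
  by_contra! hsmall
  have hnorm : ‖LinearMap.pi (fun e : T => (l e).compLeft J) x‖ ≤ η :=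
    (pi_norm_le_iff_of_nonneg hη.le).2 fun e => (hsmall e e.2).le
  have hle : ‖x‖ ≤ C * η := (hanti.le_mul_norm (map_zero _) x).trans (by gcongr)
  rw [lt_div_iff₀ (NNReal.coe_pos.2 hC)] at hηr
  linarith

theorem exists_pos_forall_finrank_lt (l : E → Module.Dual ℝ W) {r : ℝ} (hr : 0 < r) :
    ∃ η > 0, ∀ x : J → W, r ≤ ‖x‖ → ∀ T : Set E, (∀ e ∈ T, ‖(l e).compLeft J x‖ < η) →
      Set.finrank ℝ (l '' T) < Module.finrank ℝ W := by
  have hη : ∀ᶠ η in 𝓝[>] (0 : ℝ), ∀ T : Set E, Submodule.span ℝ (l '' T) = ⊤ →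
      ∀ x : J → W, r ≤ ‖x‖ → ∃ e ∈ T, η ≤ ‖(l e).compLeft J x‖ := by
    simp only [Filter.eventually_all]
    exact fun T hT => eventually_exists_mem_le_norm_compLeft l hr hT
  obtain ⟨η, hηT, hη0⟩ := (hη.and self_mem_nhdsWithin).exists
  refine ⟨η, hη0, fun x hx T hsmall => ?_⟩
  rw [← Subspace.dual_finrank_eq]
  refine Submodule.finrank_lt fun hT => ?_
  obtain ⟨e, he, hle⟩ := hηT T hT x hx
  exact (hsmall e he).not_ge hle

theorem exists_forall_norm_compLeft_lt (l : E → Module.Dual ℝ W) (R : ℝ) :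
    ∃ M, ∀ x : J → W, ‖x‖ ≤ R → ∀ e, ‖(l e).compLeft J x‖ < M := by
  have hbound : ∀ᶠ M in atTop, ∀ e, ‖((l e).compLeft J).toContinuousLinearMap‖ * R < M := by
    simp only [Filter.eventually_all]
    exact fun e => eventually_gt_atTop _
  obtain ⟨M, hM⟩ := hbound.exists
  refine ⟨M, fun x hx e => lt_of_le_of_lt ?_ (hM e)⟩
  exact ((((l e).compLeft J).toContinuousLinearMap).le_opNorm x).trans (by gcongr)

end LinearForms

section Exponent

open Filter Topology

theorem exists_lt_forall_le_mul {ι : Type*} [Finite ι] {D : ℝ} (hD : 0 < D) {p : ι → Prop}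
    {a b : ι → ℝ} (h : ∀ i, p i → a i < D * b i) :
    ∃ c, 0 < c ∧ c < D ∧ ∀ i, p i → a i ≤ c * b i := by
  have hlt : ∀ᶠ c in 𝓝[<] D, ∀ i, p i → a i < c * b i := by
    simp only [Filter.eventually_all]
    exact fun i hi => ((continuous_mul_const (b i)).tendsto D).mono_left nhdsWithin_le_nhds
      |>.eventually_const_lt (h i hi)
  obtain ⟨c, hc, hc0, hcD⟩ := (hlt.and (Ioo_mem_nhdsLT hD)).exists
  exact ⟨c, hc0, hcD, fun i hi => (hc i hi).le⟩

end Exponent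

/-! ### Integrability of products of powers of norms -/

section Integrability

open Metric Module

theorem enorm_rpow_inv_eq_ofReal {F : Type*} [NormedAddCommGroup F] {x : F} (hx : x ≠ 0) (α : ℝ) :
    (‖x‖ₑ ^ α)⁻¹ = ENNReal.ofReal (‖x‖ ^ (-α)) := by
  rw [← ENNReal.rpow_neg, ← ofReal_norm, ENNReal.ofReal_rpow_of_pos (norm_pos_iff.2 hx)]

variable {F : Type*} [NormedAddCommGroup F] [NormedSpace ℝ F] [FiniteDimensional ℝ F]
  [MeasurableSpace F] [BorelSpace F] (μ : Measure F) [μ.IsAddHaarMeasure]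

theorem integrableOn_norm_rpow_ball_iff [Nontrivial F] {R s : ℝ} (hR : 0 < R) :
    IntegrableOn (fun x : F => ‖x‖ ^ s) (ball 0 R) μ ↔ -(finrank ℝ F : ℝ) < s := by
  have hradial : Set.EqOn (fun y : ℝ => y ^ (finrank ℝ F - 1) • y ^ s)
      (fun y => y ^ ((finrank ℝ F : ℝ) - 1 + s)) (Set.Ioo 0 R) := fun y hy => by
    have hcast : ((finrank ℝ F - 1 : ℕ) : ℝ) = (finrank ℝ F : ℝ) - 1 :=
      Nat.cast_pred finrank_pos
    simp only [smul_eq_mul, ← Real.rpow_natCast, hcast, ← Real.rpow_add hy.1]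
  rw [integrableOn_fun_norm_addHaar μ (f := fun y => y ^ s),
    integrableOn_congr_fun hradial measurableSet_Ioo,
    intervalIntegral.integrableOn_Ioo_rpow_iff hR]
  constructor <;> intro h <;> linarith

theorem lintegral_ball_enorm_rpow_inv_eq_top {R α : ℝ} (hR : 0 < R) (hα : 0 < α)
    (hdim : (finrank ℝ F : ℝ) ≤ α) :
    ∫⁻ x in ball (0 : F) R, (‖x‖ₑ ^ α)⁻¹ ∂μ = ⊤ := by
  cases subsingleton_or_nontrivial F with
  | inl _ =>
    have hint (x : F) : (‖x‖ₑ ^ α)⁻¹ = ⊤ := by simp [Subsingleton.elim x 0, hα]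
    simp only [hint, lintegral_const]
    exact ENNReal.top_mul (by simpa using (measure_ball_pos μ (0 : F) hR).ne')
  | inr _ =>
    by_contra hfin
    have hint : IntegrableOn (fun x : F => ‖x‖ ^ (-α)) (ball 0 R) μ := by
      refine ⟨Measurable.aestronglyMeasurable (by fun_prop),
        lt_of_le_of_lt (lintegral_mono fun x => ?_) (lt_top_iff_ne_top.2 hfin)⟩
      rcases eq_or_ne x 0 with rfl | hx
      · simp [hα]
      · rw [enorm_rpow_inv_eq_ofReal hx, Real.enorm_of_nonneg (by positivity)]
    have := (integrableOn_norm_rpow_ball_iff μ hR).1 hint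
    linarith

theorem integrableOn_fintype_prod_norm_rpow {ι : Type*} [Fintype ι] [Nontrivial F] {R s : ℝ}
    (hR : 0 < R) (hs : -(finrank ℝ F : ℝ) < s) :
    IntegrableOn (fun x : ι → F => ∏ i, ‖x i‖ ^ s) (ball 0 R) (Measure.pi fun _ => μ) := by
  rw [IntegrableOn, ball_pi _ hR, Measure.restrict_pi_pi]
  exact Integrable.fintype_prod fun _ => (integrableOn_norm_rpow_ball_iff μ hR).2 hs

variable {ι J W : Type*} [Fintype ι] [Fintype J] [NormedAddCommGroup W] [NormedSpace ℝ W]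
  [FiniteDimensional ℝ W] [MeasurableSpace W] [BorelSpace W]
  (μ : Measure (J → W)) [μ.IsAddHaarMeasure]

theorem integrableOn_prod_norm_compLeft_rpow [Nonempty J] {b : ι → Dual ℝ W}
    (hb : LinearIndependent ℝ b) (hspan : Submodule.span ℝ (Set.range b) = ⊤) {R s : ℝ}
    (hR : 0 < R) (hs : -(Fintype.card J : ℝ) < s) :
    IntegrableOn (fun x => ∏ i, ‖(b i).compLeft J x‖ ^ s)
      {x | ∀ i, ‖(b i).compLeft J x‖ < R} μ := by
  have hdim : finrank ℝ (J → W) = finrank ℝ (ι → J → ℝ) := by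
    have hcard := finrank_span_eq_card hb
    rw [hspan, finrank_top, Subspace.dual_finrank_eq] at hcard
    simp [finrank_pi_fintype, hcard, mul_comm]
  let L := (LinearEquiv.ofInjectiveOfFinrankEq (LinearMap.pi fun i => (b i).compLeft J)
    (LinearMap.ker_eq_bot.1 (ker_pi_compLeft_eq_bot hspan)) hdim).toContinuousLinearEquiv
  have : (Measure.pi fun _ : ι => (volume : Measure (J → ℝ))).IsAddHaarMeasure :=
    Measure.pi.isAddHaarMeasure _
  have hint : IntegrableOn (fun y : ι → J → ℝ => ∏ i, ‖y i‖ ^ s) (ball 0 R) (μ.map L) := by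
    rw [Measure.isAddLeftInvariant_eq_smul (μ.map L) (Measure.pi fun _ => volume), IntegrableOn,
      Measure.restrict_smul]
    exact Integrable.smul_measure_nnreal <|
      integrableOn_fintype_prod_norm_rpow (F := J → ℝ) volume hR (by simpa using hs)
  have hcube : L ⁻¹' ball 0 R = {x | ∀ i, ‖(b i).compLeft J x‖ < R} := by
    ext x
    simp only [Set.mem_preimage, mem_ball_zero_iff, pi_norm_lt_iff hR, Set.mem_ofPred_eq]
    rfl
  rw [← hcube]
  exact (L.toHomeomorph.measurableEmbedding.integrableOn_map_iff).1 hint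

end Integrability

/-! ### Power counting -/

section Convergence

open Module

theorem exists_linearIndepOn_prod_rpow_neg_le {K M ι : Type*} [DivisionRing K] [AddCommGroup M]
    [Module K M] [Fintype ι] {c : ℝ} (hc : 0 ≤ c) (v : ι → M) {w y : ι → ℝ} (hw : ∀ i, 0 ≤ w i)
    {η m : ℝ} (hη : 0 < η) (hηm : η ≤ m) (hy : ∀ i, 0 < y i) (hym : ∀ i, y i ≤ m)
    (h : ∀ T : Finset ι, (∀ i ∈ T, y i < η) → ∑ i ∈ T, w i ≤ c * Set.finrank K (v '' T)) :
    ∃ B : Finset ι, LinearIndepOn K v (B : Set ι) ∧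
      Submodule.span K (v '' B) = Submodule.span K (Set.range v) ∧
      ∏ i, y i ^ (-w i) ≤ (∏ i, η ^ (-w i)) * ∏ i ∈ B, (y i / m) ^ (-c) := by
  obtain ⟨B, hB, hspan, hle⟩ := exists_linearIndepOn_prod_rpow_le (K := K) hc v w
    (z := fun i => max 1 (η / y i)) (fun i => le_max_left _ _) fun t ht => by
      refine (h _ fun i hi => ?_).trans_eq (by simp)
      have htz : t ≤ max 1 (η / y i) := (Finset.mem_filter.1 hi).2
      have hz : 1 < η / y i := (lt_max_iff.1 (ht.trans_le htz)).resolve_left (lt_irrefl _)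
      exact (one_lt_div (hy i)).1 hz
  refine ⟨B, hB, hspan, ?_⟩
  calc ∏ i, y i ^ (-w i) ≤ ∏ i, η ^ (-w i) * max 1 (η / y i) ^ w i := by
        refine Finset.prod_le_prod (fun i _ => Real.rpow_nonneg (hy i).le _) fun i _ => ?_
        calc y i ^ (-w i) = η ^ (-w i) * (η / y i) ^ w i := by
              rw [Real.div_rpow hη.le (hy i).le, Real.rpow_neg hη.le, Real.rpow_neg (hy i).le]
              field_simp
          _ ≤ η ^ (-w i) * max 1 (η / y i) ^ w i := by
              have hηy : 0 ≤ η / y i := (div_pos hη (hy i)).le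
              gcongr
              exacts [hw i, le_max_right _ _]
    _ = (∏ i, η ^ (-w i)) * ∏ i, max 1 (η / y i) ^ w i := Finset.prod_mul_distrib
    _ ≤ (∏ i, η ^ (-w i)) * ∏ i ∈ B, max 1 (η / y i) ^ c := by gcongr
    _ ≤ (∏ i, η ^ (-w i)) * ∏ i ∈ B, (y i / m) ^ (-c) := by
        gcongr with i
        rw [Real.rpow_neg_eq_inv_rpow, inv_div]
        refine Real.rpow_le_rpow (by positivity) (max_le ((one_le_div (hy i)).2 (hym i)) ?_) hc
        exact div_le_div_of_nonneg_right hηm (hy i).le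

variable {E J W : Type*} [Fintype E] [Fintype J] [NormedAddCommGroup W] [NormedSpace ℝ W]

open Classical in
/-- The majorant of the Feynman integrand on an annulus: the sum, over all bases `B` of `W*` chosen
among the forms `l e`, of the products of local singularities `∏ e ∈ B, (‖l e x‖ / m) ^ (-c)`. -/
noncomputable def basisMajorant (l : E → Dual ℝ W) (m c : ℝ) (x : J → W) : ℝ :=
  ∑ B ∈ Finset.univ.filter fun B : Finset E =>
      LinearIndepOn ℝ l (B : Set E) ∧ Submodule.span ℝ (l '' B) = ⊤,
    ∏ e ∈ B, (‖(l e).compLeft J x‖ / m) ^ (-c)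

theorem prod_norm_rpow_neg_le_mul_basisMajorant {l : E → Dual ℝ W}
    (hl : Submodule.span ℝ (Set.range l) = ⊤) {w : E → ℝ} (hw : ∀ e, 0 < w e) {c η m : ℝ}
    (hc : 0 ≤ c) (hη : 0 < η) (hηm : η ≤ m) {x : J → W} (hxm : ∀ e, ‖(l e).compLeft J x‖ ≤ m)
    (h : ∀ T : Finset E, (∀ e ∈ T, ‖(l e).compLeft J x‖ < η) →
      ∑ e ∈ T, w e ≤ c * Set.finrank ℝ (l '' T)) :
    ∏ e, ‖(l e).compLeft J x‖ ^ (-w e) ≤ (∏ e, η ^ (-w e)) * basisMajorant l m c x := by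
  classical
  have hm : 0 < m := hη.trans_le hηm
  have hterm (B : Finset E) : 0 ≤ ∏ e ∈ B, (‖(l e).compLeft J x‖ / m) ^ (-c) := by positivity
  by_cases hpos : ∀ e, 0 < ‖(l e).compLeft J x‖
  · obtain ⟨B, hB, hBspan, hle⟩ := exists_linearIndepOn_prod_rpow_neg_le hc l
      (fun e => (hw e).le) hη hηm hpos hxm h
    refine hle.trans (mul_le_mul_of_nonneg_left ?_ (by positivity))
    unfold basisMajorant
    refine Finset.single_le_sum (fun B _ => hterm B) ?_
    exact Finset.mem_filter.2 ⟨Finset.mem_univ _, hB, hBspan.trans hl⟩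
  · push Not at hpos
    obtain ⟨e, he⟩ := hpos
    rw [Finset.prod_eq_zero (Finset.mem_univ e)]
    · exact mul_nonneg (by positivity) (Finset.sum_nonneg fun B _ => hterm B)
    · rw [le_antisymm he (norm_nonneg _), Real.zero_rpow (neg_ne_zero.2 (hw e).ne')]

variable [Nonempty J] [FiniteDimensional ℝ W] [MeasurableSpace W] [BorelSpace W]
  (μ : Measure (J → W)) [μ.IsAddHaarMeasure]

theorem integrableOn_basisMajorant (l : E → Dual ℝ W) {m c : ℝ} (hm : 0 < m)
    (hc : c < Fintype.card J) :
    IntegrableOn (basisMajorant l m c) {x : J → W | ∀ e, ‖(l e).compLeft J x‖ < m} μ := by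
  classical
  refine integrable_finsetSum _ fun B hB => ?_
  obtain ⟨hBind, hBspan⟩ := (Finset.mem_filter.1 hB).2
  rw [Set.image_eq_range] at hBspan
  have hint := integrableOn_prod_norm_compLeft_rpow μ hBind hBspan hm (neg_lt_neg hc)
  simp_rw [Real.div_rpow (norm_nonneg _) hm.le, Finset.prod_div_distrib, ← Finset.prod_coe_sort B]
  have hsubset : {x : J → W | ∀ e, ‖(l e).compLeft J x‖ < m} ⊆
      {x | ∀ e : B, ‖(l e).compLeft J x‖ < m} := fun x hx e => hx e
  exact (hint.mono_set hsubset).div_const _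

theorem integrableOn_annulus_prod_norm_rpow_neg {l : E → Dual ℝ W}
    (hl : Submodule.span ℝ (Set.range l) = ⊤) {w : E → ℝ} (hw : ∀ e, 0 < w e) {r : ℝ}
    (hr : 0 < r) (R : ℝ)
    (h : ∀ T : Finset E, T.Nonempty → Set.finrank ℝ (l '' T) < finrank ℝ W →
      ∑ e ∈ T, w e < Fintype.card J * Set.finrank ℝ (l '' T)) :
    IntegrableOn (fun x => ∏ e, ‖(l e).compLeft J x‖ ^ (-w e)) {x | r ≤ ‖x‖ ∧ ‖x‖ ≤ R} μ := by
  obtain ⟨η, hη, hrank⟩ := exists_pos_forall_finrank_lt (J := J) l hr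
  obtain ⟨m₀, hbound⟩ := exists_forall_norm_compLeft_lt (J := J) l R
  obtain ⟨c, hc, hcJ, hcT⟩ := exists_lt_forall_le_mul (Nat.cast_pos.2 (Fintype.card_pos (α := J)))
    fun (T : Finset E) (hT : T.Nonempty ∧ Set.finrank ℝ (l '' T) < finrank ℝ W) => h T hT.1 hT.2
  have hm : 0 < max η m₀ := lt_max_of_lt_left hη
  have hmajorant : IntegrableOn (basisMajorant l (max η m₀) c) {x | r ≤ ‖x‖ ∧ ‖x‖ ≤ R} μ :=
    (integrableOn_basisMajorant μ l hm hcJ).mono_set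
      fun x hx e => (hbound x hx.2 e).trans_le (le_max_right _ _)
  have (e : E) : Measurable fun x => ‖(l e).compLeft J x‖ :=
    ((l e).compLeft J).continuous_of_finiteDimensional.norm.measurable
  have hannulus : MeasurableSet {x : J → W | r ≤ ‖x‖ ∧ ‖x‖ ≤ R} :=
    (measurableSet_le measurable_const measurable_norm).inter
      (measurableSet_le measurable_norm measurable_const)
  refine (hmajorant.const_mul (∏ e, η ^ (-w e))).mono'
    (Measurable.aestronglyMeasurable (by fun_prop))
    (ae_restrict_of_forall_mem hannulus fun x hx => ?_)
  rw [Real.norm_of_nonneg (by positivity)]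
  refine prod_norm_rpow_neg_le_mul_basisMajorant hl hw hc.le hη (le_max_left _ _)
    (fun e => (hbound x hx.2 e).le.trans (le_max_right _ _)) fun T hT => ?_
  rcases T.eq_empty_or_nonempty with rfl | hT0
  · simp
  · exact hcT T ⟨hT0, hrank x hx.1 T hT⟩

end Convergence

section Divergence

open Module Metric

theorem setLIntegral_eq_top_of_forall_mem_submodule_le {U : Type*} [NormedAddCommGroup U]
    [NormedSpace ℝ U] [FiniteDimensional ℝ U] [MeasurableSpace U] [BorelSpace U] (μ : Measure U)
    [μ.IsAddHaarMeasure] {K : Submodule ℝ U} {O : Set U} (hO : IsOpen O) {p : U} (hpK : p ∈ K)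
    (hpO : p ∈ O) {α : ℝ} (hα : 0 < α) (hdim : (finrank ℝ (U ⧸ K) : ℝ) ≤ α) {f : U → ENNReal}
    {N : ENNReal} (hN : N ≠ ⊤)
    (hf : ∀ x ∈ O, ∀ k ∈ K, (N * ‖x - k‖ₑ ^ α)⁻¹ ≤ f x) :
    ∫⁻ x in O, f x ∂μ = ⊤ := by
  obtain ⟨C, hC⟩ := K.exists_isCompl
  let L := (K.prodEquivOfIsCompl C hC).toContinuousLinearEquiv
  have hL (u : K × C) : L u = u.1 + u.2 := K.coe_prodEquivOfIsCompl' C hC u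
  let ν : Measure (K × C) := Measure.addHaar.prod Measure.addHaar
  obtain ⟨ε, hε, hball⟩ := Metric.isOpen_iff.1 (hO.preimage L.continuous) (⟨p, hpK⟩, 0)
    (by simpa [hL] using hpO)
  rw [← ball_prod_same] at hball
  have hbox : ∫⁻ u in ball ⟨p, hpK⟩ ε ×ˢ ball 0 ε, N⁻¹ * (‖u.2‖ₑ ^ α)⁻¹ ∂ν = ⊤ := by
    rw [← Measure.prod_restrict,
      lintegral_prod_mul (f := fun _ => N⁻¹) (g := fun v : C => (‖v‖ₑ ^ α)⁻¹) (by fun_prop)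
        (by fun_prop), lintegral_ball_enorm_rpow_inv_eq_top _ hε hα, lintegral_const]
    · refine ENNReal.mul_top (mul_ne_zero (ENNReal.inv_ne_zero.2 hN) ?_)
      simpa using (measure_ball_pos Measure.addHaar (⟨p, hpK⟩ : K) hε).ne'
    · rwa [← (K.quotientEquivOfIsCompl C hC).finrank_eq]
  have htop : ∫⁻ x in O, f x ∂(ν.map L) = ⊤ := by
    have hemb : MeasurableEmbedding L := L.toHomeomorph.measurableEmbedding
    rw [hemb.restrict_map, hemb.lintegral_map, eq_top_iff, ← hbox]
    refine (setLIntegral_mono_ae' (measurableSet_ball.prod measurableSet_ball) ?_).trans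
      (lintegral_mono_set hball)
    refine .of_forall fun u hu => ?_
    have hle := hf (L u) (hball hu) u.1 u.1.2
    rwa [hL, add_sub_cancel_left, ENNReal.mul_inv
      (.inr (ENNReal.rpow_ne_top_of_nonneg hα.le enorm_ne_top)) (.inl hN)] at hle
  rw [Measure.isAddLeftInvariant_eq_smul (ν.map L) μ, Measure.restrict_smul,
    lintegral_smul_measure] at htop
  by_contra hfin
  exact ENNReal.mul_ne_top ENNReal.coe_ne_top hfin htop

theorem finrank_quotient_pi_dualCoannihilator {k W : Type*} (J : Type*) [Field k] [AddCommGroup W]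
    [Module k W] [FiniteDimensional k W] [Fintype J] (Φ : Submodule k (Dual k W)) :
    finrank k ((J → W) ⧸ Submodule.pi Set.univ fun _ : J => Φ.dualCoannihilator) =
      Fintype.card J * finrank k Φ := by
  classical
  have hquot : finrank k (W ⧸ Φ.dualCoannihilator) = finrank k Φ := by
    have := Subspace.finrank_add_finrank_dualCoannihilator_eq Φ
    have := Φ.dualCoannihilator.finrank_quotient_add_finrank
    omega
  rw [(Submodule.quotientPi fun _ : J => Φ.dualCoannihilator).finrank_eq, finrank_pi_fintype,
    Finset.sum_const, hquot, smul_eq_mul, Finset.card_univ]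

theorem compLeft_sub_eq_of_mem_dualCoannihilator {k W J : Type*} [Field k] [AddCommGroup W]
    [Module k W] {Φ : Submodule k (Dual k W)} {f : Dual k W} (hf : f ∈ Φ) (x : J → W) {y : J → W}
    (hy : y ∈ Submodule.pi Set.univ fun _ : J => Φ.dualCoannihilator) :
    f.compLeft J (x - y) = f.compLeft J x := by
  have hfy : f.compLeft J y = 0 :=
    funext fun j => (Submodule.mem_dualCoannihilator _).1 (hy j trivial) f hf
  rw [map_sub, hfy, sub_zero]

theorem prod_ennreal_rpow_eq_rpow_sum {ι : Type*} (s : Finset ι) (a : ENNReal) {w : ι → ℝ}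
    (hw : ∀ i ∈ s, 0 ≤ w i) : ∏ i ∈ s, a ^ w i = a ^ ∑ i ∈ s, w i := by
  classical
  induction s using Finset.induction_on with
  | empty => simp
  | insert i s hi ih =>
    rw [Finset.forall_mem_insert] at hw
    rw [Finset.prod_insert hi, Finset.sum_insert hi, ih hw.2,
      ENNReal.rpow_add_of_nonneg _ _ hw.1 (Finset.sum_nonneg hw.2)]

variable {E J W : Type*} [Fintype E] [Fintype J] [NormedAddCommGroup W] [NormedSpace ℝ W]

theorem exists_mem_pi_norm_eq [Nonempty J] {K : Submodule ℝ W} (hK : K ≠ ⊥) {ρ : ℝ} (hρ : 0 ≤ ρ) :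
    ∃ x ∈ Submodule.pi Set.univ fun _ : J => K, ‖x‖ = ρ := by
  have := (Submodule.nontrivial_iff_ne_bot).2 hK
  obtain ⟨p, hp⟩ := exists_norm_eq K hρ
  exact ⟨fun _ => p, fun _ _ => p.2, by rw [pi_norm_const]; exact hp⟩

variable [FiniteDimensional ℝ W]

theorem exists_ne_top_prod_enorm_rpow_le (l : E → Dual ℝ W) {w : E → ℝ}
    (hw : ∀ e, 0 ≤ w e) (T : Finset E) (R : ℝ) :
    ∃ N : ENNReal, N ≠ ⊤ ∧ ∀ x : J → W, ‖x‖ < R →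
      ∀ k ∈ Submodule.pi Set.univ fun _ : J => (Submodule.span ℝ (l '' T)).dualCoannihilator,
        ∏ e, ‖(l e).compLeft J x‖ₑ ^ w e ≤ N * ‖x - k‖ₑ ^ ∑ e ∈ T, w e := by
  classical
  let Λ (e : E) := ((l e).compLeft J).toContinuousLinearMap
  refine ⟨(∏ e ∈ T, ‖Λ e‖ₑ ^ w e) * ∏ e ∈ Tᶜ, (‖Λ e‖ₑ * ENNReal.ofReal R) ^ w e, ?_,
    fun x hx k hk => ?_⟩
  · refine ENNReal.mul_ne_top (ENNReal.prod_ne_top fun e _ => ?_)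
      (ENNReal.prod_ne_top fun e _ => ?_)
    · exact ENNReal.rpow_ne_top_of_nonneg (hw e) enorm_ne_top
    · exact ENNReal.rpow_ne_top_of_nonneg (hw e)
        (ENNReal.mul_ne_top enorm_ne_top ENNReal.ofReal_ne_top)
  have hT (e : E) (he : e ∈ T) :
      ‖(l e).compLeft J x‖ₑ ^ w e ≤ ‖Λ e‖ₑ ^ w e * ‖x - k‖ₑ ^ w e := by
    have he : l e ∈ Submodule.span ℝ (l '' T) := Submodule.subset_span ⟨e, he, rfl⟩
    rw [← compLeft_sub_eq_of_mem_dualCoannihilator he x hk, ← ENNReal.mul_rpow_of_nonneg _ _ (hw e)]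
    exact ENNReal.rpow_le_rpow ((Λ e).le_opENorm _) (hw e)
  have hTc (e : E) : ‖(l e).compLeft J x‖ₑ ^ w e ≤ (‖Λ e‖ₑ * ENNReal.ofReal R) ^ w e := by
    refine ENNReal.rpow_le_rpow (((Λ e).le_opENorm x).trans ?_) (hw e)
    gcongr
    rw [← ofReal_norm]
    exact ENNReal.ofReal_le_ofReal hx.le
  calc ∏ e, ‖(l e).compLeft J x‖ₑ ^ w e
      = (∏ e ∈ T, ‖(l e).compLeft J x‖ₑ ^ w e) * ∏ e ∈ Tᶜ, ‖(l e).compLeft J x‖ₑ ^ w e :=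
        (Finset.prod_mul_prod_compl _ _).symm
    _ ≤ (∏ e ∈ T, ‖Λ e‖ₑ ^ w e * ‖x - k‖ₑ ^ w e) *
          ∏ e ∈ Tᶜ, (‖Λ e‖ₑ * ENNReal.ofReal R) ^ w e :=
        mul_le_mul' (Finset.prod_le_prod' hT) (Finset.prod_le_prod' fun e _ => hTc e)
    _ = _ := by
        rw [Finset.prod_mul_distrib, prod_ennreal_rpow_eq_rpow_sum _ _ fun e _ => hw e,
          mul_right_comm]

variable [Nonempty J] [MeasurableSpace W] [BorelSpace W]
  (μ : Measure (J → W)) [μ.IsAddHaarMeasure]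

theorem setLIntegral_annulus_prod_enorm_rpow_inv_eq_top (l : E → Dual ℝ W) {w : E → ℝ}
    (hw : ∀ e, 0 < w e) {r R : ℝ} (hr : 0 ≤ r) (hrR : r < R) {T : Finset E} (hT : T.Nonempty)
    (hrank : Set.finrank ℝ (l '' T) < finrank ℝ W)
    (hTw : Fintype.card J * Set.finrank ℝ (l '' T) ≤ ∑ e ∈ T, w e) :
    ∫⁻ x in {x | r ≤ ‖x‖ ∧ ‖x‖ ≤ R}, (∏ e, ‖(l e).compLeft J x‖ₑ ^ w e)⁻¹ ∂μ = ⊤ := by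
  obtain ⟨N, hN, hle⟩ := exists_ne_top_prod_enorm_rpow_le (J := J) l (fun e => (hw e).le) T R
  have hK : (Submodule.span ℝ (l '' T)).dualCoannihilator ≠ ⊥ := fun hbot => by
    have hdim := Subspace.finrank_add_finrank_dualCoannihilator_eq (Submodule.span ℝ (l '' T))
    rw [hbot, finrank_bot, add_zero] at hdim
    exact hrank.ne hdim
  obtain ⟨p, hpK, hp⟩ := exists_mem_pi_norm_eq (J := J) hK (by linarith : 0 ≤ (r + R) / 2)
  refine top_unique (le_trans (ge_of_eq ?_) (lintegral_mono_set (s := {x | r < ‖x‖ ∧ ‖x‖ < R})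
    fun x hx => ⟨hx.1.le, hx.2.le⟩))
  refine setLIntegral_eq_top_of_forall_mem_submodule_le μ
    ((isOpen_lt continuous_const continuous_norm).inter
      (isOpen_lt continuous_norm continuous_const)) hpK ?_
    (Finset.sum_pos (fun e _ => hw e) hT) ?_ hN
    fun x hx k hk => ENNReal.inv_le_inv.2 (hle x hx.2 k hk)
  · simp only [Set.mem_inter_iff, Set.mem_ofPred_eq, hp]
    constructor <;> linarith
  · rw [finrank_quotient_pi_dualCoannihilator]
    exact_mod_cast hTw

end Divergence

section PowerCounting

open Module

theorem enorm_sq_le_ofReal_sum_sq {J : Type*} [Fintype J] (y : J → ℝ) :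
    ‖y‖ₑ ^ 2 ≤ ENNReal.ofReal (∑ j, y j ^ 2) := by
  rw [← ofReal_norm, ← ENNReal.ofReal_pow (norm_nonneg y)]
  refine ENNReal.ofReal_le_ofReal (Real.le_sqrt (norm_nonneg y) (by positivity) |>.1 ?_)
  refine (pi_norm_le_iff_of_nonneg (Real.sqrt_nonneg _)).2 fun j => Real.abs_le_sqrt ?_
  exact Finset.single_le_sum (f := fun j => y j ^ 2) (fun j _ => sq_nonneg _) (Finset.mem_univ j)

theorem ofReal_sum_sq_le_card_mul_enorm_sq {J : Type*} [Fintype J] (y : J → ℝ) :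
    ENNReal.ofReal (∑ j, y j ^ 2) ≤ Fintype.card J * ‖y‖ₑ ^ 2 := by
  rw [ENNReal.ofReal_sum_of_nonneg fun j _ => sq_nonneg (y j), ← nsmul_eq_mul]
  refine Finset.sum_le_card_nsmul _ _ _ fun j _ => ?_
  rw [← sq_abs, ENNReal.ofReal_pow (abs_nonneg _), ← Real.norm_eq_abs, ofReal_norm]
  gcongr
  exact enorm_le_iff_norm_le.2 (norm_le_pi_norm y j)

variable {E J W : Type*} [Nonempty J] [NormedAddCommGroup W]
  [NormedSpace ℝ W] [FiniteDimensional ℝ W] [MeasurableSpace W] [BorelSpace W]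

theorem ae_compLeft_ne_zero [Finite J] (μ : Measure (J → W)) [μ.IsAddHaarMeasure] {f : Dual ℝ W}
    (hf : f ≠ 0) : ∀ᵐ x ∂μ, f.compLeft J x ≠ 0 := by
  cases nonempty_fintype J
  refine measure_eq_zero_iff_ae_notMem.1
    (Measure.addHaar_submodule μ (LinearMap.ker (f.compLeft J)) fun htop => hf ?_)
  ext v
  obtain ⟨j⟩ := ‹Nonempty J›
  have hv : (fun _ : J => v) ∈ LinearMap.ker (f.compLeft J) := htop ▸ Submodule.mem_top
  exact congrFun (LinearMap.mem_ker.1 hv) j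

variable [Fintype J] (μ : Measure (J → W)) [μ.IsAddHaarMeasure]

theorem ae_restrict_annulus_forall_compLeft_ne_zero [Finite E] {l : E → Dual ℝ W} {w : E → ℝ}
    (hw : ∀ e, 0 < w e) {r : ℝ} (hr : 0 < r) (R : ℝ)
    (h : ∀ T : Finset E, T.Nonempty → Set.finrank ℝ (l '' T) < finrank ℝ W →
      ∑ e ∈ T, w e < Fintype.card J * Set.finrank ℝ (l '' T)) :
    ∀ᵐ x ∂μ.restrict {x | r ≤ ‖x‖ ∧ ‖x‖ ≤ R}, ∀ e, (l e).compLeft J x ≠ 0 := by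
  cases subsingleton_or_nontrivial W with
  | inl _ =>
    have hempty : {x : J → W | r ≤ ‖x‖ ∧ ‖x‖ ≤ R} = ∅ := by
      ext x
      simp [Subsingleton.elim x 0, hr]
    simp [hempty]
  | inr _ =>
    refine ae_all_iff.2 fun e => ae_restrict_of_ae (ae_compLeft_ne_zero μ fun he => ?_)
    have hrank : Set.finrank ℝ (l '' ({e} : Finset E)) = 0 := by
      simp [Set.finrank, he]
    have := h {e} (Finset.singleton_nonempty e) (hrank ▸ finrank_pos)
    rw [hrank, Finset.sum_singleton, Nat.cast_zero, mul_zero] at this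
    exact (hw e).not_gt this

variable [Fintype E]

theorem setLIntegral_annulus_prod_enorm_rpow_inv_lt_top_iff {l : E → Dual ℝ W}
    (hl : Submodule.span ℝ (Set.range l) = ⊤) {w : E → ℝ} (hw : ∀ e, 0 < w e) {r R : ℝ}
    (hr : 0 < r) (hrR : r < R) :
    ∫⁻ x in {x | r ≤ ‖x‖ ∧ ‖x‖ ≤ R}, (∏ e, ‖(l e).compLeft J x‖ₑ ^ w e)⁻¹ ∂μ < ⊤ ↔
      ∀ T : Finset E, T.Nonempty → Set.finrank ℝ (l '' T) < finrank ℝ W →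
        ∑ e ∈ T, w e < Fintype.card J * Set.finrank ℝ (l '' T) := by
  refine ⟨fun hfin T hT hrank => ?_, fun h => ?_⟩
  · by_contra! hTw
    exact hfin.ne (setLIntegral_annulus_prod_enorm_rpow_inv_eq_top μ l hw hr.le hrR hT hrank hTw)
  · have hint := integrableOn_annulus_prod_norm_rpow_neg μ hl hw hr R h
    refine lt_of_eq_of_lt (lintegral_congr_ae ?_) hint.2
    filter_upwards [ae_restrict_annulus_forall_compLeft_ne_zero μ hw hr R h] with x hx
    rw [Real.enorm_of_nonneg (by positivity),
      ENNReal.ofReal_prod_of_nonneg fun e _ => by positivity, ENNReal.prod_inv_distrib]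
    · exact Finset.prod_congr rfl fun e _ => enorm_rpow_inv_eq_ofReal (hx e) (w e)
    · exact fun e _ _ _ _ => .inr (ENNReal.rpow_ne_top_of_nonneg (hw _).le enorm_ne_top)

theorem lintegral_prod_sum_sq_inv_lt_top_iff {X : Type*} [MeasurableSpace X] (ν : Measure X)
    (y : E → X → J → ℝ) :
    ∫⁻ x, (∏ e, ENNReal.ofReal (∑ j, y e x j ^ 2))⁻¹ ∂ν < ⊤ ↔
      ∫⁻ x, (∏ e, ‖y e x‖ₑ ^ 2)⁻¹ ∂ν < ⊤ := by
  set N : ENNReal := ∏ _e : E, (Fintype.card J : ENNReal) with hN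
  have hN0 : N ≠ 0 := Finset.prod_ne_zero_iff.2 fun _ _ => by simp
  have hNtop : N ≠ ⊤ := ENNReal.prod_ne_top fun _ _ => ENNReal.natCast_ne_top _
  refine ⟨fun hfin => ?_, fun hfin => lt_of_le_of_lt (lintegral_mono fun x => ?_) hfin⟩
  · refine lt_of_le_of_lt (lintegral_mono fun x => ?_)
      ((lintegral_const_mul' N _ hNtop).trans_lt (ENNReal.mul_lt_top hNtop.lt_top hfin))
    rw [← ENNReal.inv_le_inv, ENNReal.mul_inv (.inl hN0) (.inl hNtop), inv_inv, inv_inv, mul_comm,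
      ← div_eq_mul_inv]
    refine ENNReal.div_le_of_le_mul' ?_
    rw [hN, ← Finset.prod_mul_distrib]
    exact Finset.prod_le_prod' fun e _ => ofReal_sum_sq_le_card_mul_enorm_sq (y e x)
  · exact ENNReal.inv_le_inv.2 (Finset.prod_le_prod' fun e _ => enorm_sq_le_ofReal_sum_sq (y e x))

theorem setLIntegral_annulus_prod_sum_sq_inv_lt_top_iff {l : E → Dual ℝ W}
    (hl : Submodule.span ℝ (Set.range l) = ⊤) {r R : ℝ} (hr : 0 < r) (hrR : r < R) :
    ∫⁻ x in {x | r ≤ ‖x‖ ∧ ‖x‖ ≤ R}, (∏ e, ENNReal.ofReal (∑ j, l e (x j) ^ 2))⁻¹ ∂μ < ⊤ ↔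
      ∀ T : Finset E, T.Nonempty → Set.finrank ℝ (l '' T) < finrank ℝ W →
        2 * T.card < Fintype.card J * Set.finrank ℝ (l '' T) := by
  have h := setLIntegral_annulus_prod_enorm_rpow_inv_lt_top_iff μ hl (fun _ => two_pos) hr hrR
  simp only [ENNReal.rpow_two, Finset.sum_const, nsmul_eq_mul] at h
  refine (lintegral_prod_sum_sq_inv_lt_top_iff _ fun e x => (l e).compLeft J x).trans
    (h.trans (forall₃_congr fun T _ _ => ?_))
  rw [mul_comm]
  exact_mod_cast Iff.rfl

end PowerCounting

/-! ### Cycle spaces and edge forms -/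

section CycleSpace

open Module
open scoped Matrix

section BaseChange

variable {K L ι m : Type*} [Field K] [Field L] [Algebra K L]

theorem finrank_le_finrank_of_algebraMap_comp_mem [Finite ι] {P : Submodule K (ι → K)}
    {Q : Submodule L (ι → L)} (h : ∀ x ∈ P, algebraMap K L ∘ x ∈ Q) :
    finrank K P ≤ finrank L Q := by
  have hli : LinearIndependent L fun i => algebraMap K L ∘ ((finBasis K P i : P) : ι → K) :=
    linearIndependent_algebraMap_comp_iff.2
      ((finBasis K P).linearIndependent.map' P.subtype P.ker_subtype)
  have hli' : LinearIndependent L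
      (fun i => ⟨_, h _ (finBasis K P i).2⟩ : Fin (finrank K P) → Q) :=
    .of_comp Q.subtype hli
  simpa using hli'.fintype_card_le_finrank

theorem finrank_ker_mulVecLin_map_algebraMap [Fintype ι] [Finite m] (A : Matrix m ι K) :
    finrank L (LinearMap.ker (A.map (algebraMap K L)).mulVecLin) =
      finrank K (LinearMap.ker A.mulVecLin) := by
  have hmap (x : ι → K) : A.map (algebraMap K L) *ᵥ (algebraMap K L ∘ x) =
      algebraMap K L ∘ (A *ᵥ x) :=
    funext fun i => (RingHom.map_mulVec (algebraMap K L) A x i).symm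
  have hker := finrank_le_finrank_of_algebraMap_comp_mem (L := L)
    (P := LinearMap.ker A.mulVecLin) (Q := LinearMap.ker (A.map (algebraMap K L)).mulVecLin)
    fun x hx => by
      rw [LinearMap.mem_ker, Matrix.mulVecLin_apply] at hx ⊢
      rw [hmap, hx]
      ext; simp
  have hrange := finrank_le_finrank_of_algebraMap_comp_mem (L := L)
    (P := LinearMap.range A.mulVecLin) (Q := LinearMap.range (A.map (algebraMap K L)).mulVecLin)
    fun y ⟨x, hx⟩ => ⟨algebraMap K L ∘ x, by rw [Matrix.mulVecLin_apply, hmap, ← hx]; rfl⟩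
  have hK := A.mulVecLin.finrank_range_add_finrank_ker
  have hL := (A.map (algebraMap K L)).mulVecLin.finrank_range_add_finrank_ker
  rw [finrank_fintype_fun_eq_card] at hK hL
  omega

end BaseChange

variable {U : Type} [LinearOrder U] (G : SimpleGraph U)

open Classical in
/-- The incidence matrix of `G` stacked on the diagonal matrix of the indicator function of the
edges outside `S`. It exhibits the space of cycles supported in `S` as the kernel of a matrix with
integer entries. -/
noncomputable def supportedIncMatrix (R : Type) [CommRing R] (S : Set (Sym2 U)) :
    Matrix (U ⊕ G.edgeSet) G.edgeSet R :=
  Matrix.fromRows (Matrix.of fun v e => incSign R v e.1)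
    (Matrix.diagonal fun e => if e.1 ∈ S then 0 else 1)

theorem supportedIncMatrix_map {R R' : Type} [CommRing R] [CommRing R'] (σ : R →+* R')
    (S : Set (Sym2 U)) : (supportedIncMatrix G R S).map σ = supportedIncMatrix G R' S := by
  ext (v | e') e <;>
  simp [supportedIncMatrix, incSign, Matrix.diagonal_apply, apply_ite σ]

variable [Fintype G.edgeSet]

theorem ker_supportedIncMatrix (R : Type) [Field R] (S : Set (Sym2 U)) :
    LinearMap.ker (supportedIncMatrix G R S).mulVecLin =
      LinearMap.ker (boundary R G) ⊓ supportedIn R G S := by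
  ext f
  have hsupp : f ∈ supportedIn R G S ↔ ∀ e : G.edgeSet, (e : Sym2 U) ∉ S → f e = 0 := Iff.rfl
  simp [supportedIncMatrix, boundary, hsupp, Matrix.fromRows_mulVec, funext_iff,
    Matrix.mulVec_diagonal]

theorem finrank_ker_boundary_inf_supportedIn_eq_h1S [Finite U] (K : Type) [Field K] [Algebra ℚ K]
    (S : Set (Sym2 U)) :
    finrank K ↥(LinearMap.ker (boundary K G) ⊓ supportedIn K G S) = h1S G S := by
  rw [h1S, ← ker_supportedIncMatrix, ← ker_supportedIncMatrix,
    ← supportedIncMatrix_map G (algebraMap ℚ K), finrank_ker_mulVecLin_map_algebraMap]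

variable {G} {K : Type} {W : Type*} [Field K] [AddCommGroup W] [Module K W]

/-- The momentum `ℓ_e` carried by the edge `e`, as a linear form on a space `W` of loop momenta
identified with the cycle space by `φ`. -/
noncomputable def edgeForm (φ : W ≃ₗ[K] LinearMap.ker (boundary K G)) (e : G.edgeSet) : Dual K W :=
  LinearMap.proj e ∘ₗ (LinearMap.ker (boundary K G)).subtype ∘ₗ φ.toLinearMap

theorem mem_dualCoannihilator_span_edgeForm (φ : W ≃ₗ[K] LinearMap.ker (boundary K G))
    (T : Set G.edgeSet) (x : W) :
    x ∈ (Submodule.span K (edgeForm φ '' T)).dualCoannihilator ↔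
      ∀ e ∈ T, (φ x : G.edgeSet → K) e = 0 := by
  rw [← SetLike.mem_coe, Submodule.coe_dualCoannihilator_span]
  exact Set.forall_mem_image

theorem span_range_edgeForm (φ : W ≃ₗ[K] LinearMap.ker (boundary K G)) :
    Submodule.span K (Set.range (edgeForm φ)) = ⊤ := by
  have := Module.Finite.equiv φ.symm
  have hbot : (Submodule.span K (Set.range (edgeForm φ))).dualCoannihilator = ⊥ := by
    refine (Submodule.eq_bot_iff _).2 fun x hx => φ.map_eq_zero_iff.1 (Subtype.ext (funext ?_))
    rw [← Set.image_univ, mem_dualCoannihilator_span_edgeForm] at hx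
    exact fun e => hx e trivial
  rw [← Subspace.dualCoannihilator_dualAnnihilator_eq (W := Submodule.span K _), hbot,
    Submodule.dualAnnihilator_bot]

theorem map_dualCoannihilator_span_edgeForm (φ : W ≃ₗ[K] LinearMap.ker (boundary K G))
    (T : Set G.edgeSet) :
    (Submodule.span K (edgeForm φ '' T)).dualCoannihilator.map
        ((LinearMap.ker (boundary K G)).subtype ∘ₗ φ.toLinearMap) =
      LinearMap.ker (boundary K G) ⊓ supportedIn K G (Subtype.val '' Tᶜ) := by
  have hsupp (f : G.edgeSet → K) :
      f ∈ supportedIn K G (Subtype.val '' Tᶜ) ↔ ∀ e ∈ T, f e = 0 :=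
    forall_congr' fun e => by simp
  ext f
  simp only [Submodule.mem_map, Submodule.mem_inf, mem_dualCoannihilator_span_edgeForm, hsupp]
  constructor
  · rintro ⟨x, hx, rfl⟩
    exact ⟨(φ x).2, hx⟩
  · rintro ⟨hker, hf⟩
    exact ⟨φ.symm ⟨f, hker⟩, by simpa using hf, by simp⟩

theorem finrank_image_edgeForm_add_h1S [Finite U] [Algebra ℚ K]
    (φ : W ≃ₗ[K] LinearMap.ker (boundary K G)) (T : Set G.edgeSet) :
    Set.finrank K (edgeForm φ '' T) + h1S G (Subtype.val '' Tᶜ) = finrank K W := by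
  have := Module.Finite.equiv φ.symm
  have hinj : Function.Injective ((LinearMap.ker (boundary K G)).subtype ∘ₗ φ.toLinearMap) :=
    Subtype.val_injective.comp φ.injective
  rw [← finrank_ker_boundary_inf_supportedIn_eq_h1S G K, ← map_dualCoannihilator_span_edgeForm φ,
    ← (Submodule.equivMapOfInjective _ hinj _).finrank_eq]
  exact Subspace.finrank_add_finrank_dualCoannihilator_eq _

theorem ncard_image_compl_add_card {α : Type*} {s : Set α} [Fintype s] (T : Finset s) :
    (Subtype.val '' (T : Set s)ᶜ).ncard + T.card = Fintype.card s := by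
  rw [Set.ncard_image_of_injective _ Subtype.val_injective, add_comm, ← Set.ncard_coe_finset,
    Set.ncard_add_ncard_compl, Nat.card_eq_fintype_card]

theorem exists_finset_eq_image_compl {α : Type*} {s S : Set α} [Finite s] (hS : S ⊆ s) :
    ∃ T : Finset s, S = Subtype.val '' (T : Set s)ᶜ := by
  have := Fintype.ofFinite s
  exact ⟨(Set.toFinite (Subtype.val ⁻¹' S : Set s)ᶜ).toFinset, by simp [hS]⟩

theorem two_mul_card_lt_iff_mul_h1S_lt [Finite U] [Algebra ℚ K]
    (φ : W ≃ₗ[K] LinearMap.ker (boundary K G)) {d : ℕ}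
    (hlog : 2 * Fintype.card G.edgeSet = d * finrank K W) (T : Finset G.edgeSet) :
    2 * T.card < d * Set.finrank K (edgeForm φ '' T) ↔
      d * h1S G (Subtype.val '' (T : Set G.edgeSet)ᶜ) <
        2 * (Subtype.val '' (T : Set G.edgeSet)ᶜ).ncard := by
  rw [← finrank_image_edgeForm_add_h1S φ T, ← ncard_image_compl_add_card T] at hlog
  lia

end CycleSpace

theorem feynman_period_converges_iff_primitive_log_divergent_general {U : Type} [Finite U]
    [LinearOrder U] (G : SimpleGraph U) [Fintype G.edgeSet] {J W : Type*} [Fintype J] [Nonempty J]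
    [NormedAddCommGroup W] [NormedSpace ℝ W] [MeasurableSpace W] [BorelSpace W]
    (μ : Measure (J → W)) [μ.IsAddHaarMeasure] (φ : W ≃ₗ[ℝ] LinearMap.ker (boundary ℝ G))
    (hlog : 2 * Fintype.card G.edgeSet = Fintype.card J * Module.finrank ℝ W)
    {r R : ℝ} (hr : 0 < r) (hrR : r < R) :
    (∫⁻ x in {x | r ≤ ‖x‖ ∧ ‖x‖ ≤ R},
        (∏ e, ENNReal.ofReal (∑ j, (φ (x j) : G.edgeSet → ℝ) e ^ 2))⁻¹ ∂μ) < ⊤ ↔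
      ∀ S ⊆ G.edgeSet, S.Nonempty → S ≠ G.edgeSet →
        Fintype.card J * h1S G S < 2 * S.ncard := by
  have := Module.Finite.equiv φ.symm
  refine (setLIntegral_annulus_prod_sum_sq_inv_lt_top_iff μ (span_range_edgeForm φ) hr hrR).trans
    ⟨fun h S hS hne hproper => ?_, fun h T hT hrank => ?_⟩
  · obtain ⟨T, rfl⟩ := exists_finset_eq_image_compl hS
    have hTne : T.Nonempty := by
      by_contra! hT
      simp [hT] at hproper
    have hdim := finrank_image_edgeForm_add_h1S φ T
    rcases (Nat.le_of_add_right_le hdim.le).lt_or_eq with hrank | hrank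
    · exact (two_mul_card_lt_iff_mul_h1S_lt φ hlog T).1 (h T hTne hrank)
    · have hcycles : h1S G (Subtype.val '' (T : Set G.edgeSet)ᶜ) = 0 := by omega
      rw [hcycles, mul_zero]
      exact mul_pos two_pos ((Set.ncard_pos (Set.toFinite _)).2 hne)
  · refine (two_mul_card_lt_iff_mul_h1S_lt φ hlog T).2 (h _ (by simp) ?_ ?_)
    · rw [Set.image_nonempty, Set.nonempty_compl]
      intro hT
      rw [hT, Set.image_univ, Set.finrank, span_range_edgeForm, finrank_top,
        Subspace.dual_finrank_eq] at hrank
      exact hrank.ne rfl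
    · intro hS
      obtain ⟨e, he⟩ := hT
      obtain ⟨e', he', heq⟩ := hS.ge e.2
      exact he' (Subtype.ext heq ▸ he)

/-- **Convergence of the Feynman period iff the graph is primitive log divergent**
(Proposition 4.2 of Bloch–Esnault–Kreimer).  Let `G` be a finite connected simple
graph with `n = h_1(G) ≥ 1` loops and `2n` edges, let `φ : ℝ^n ≅ ker ∂_ℝ` be a
linear isomorphism, `ℓ_e` the composite of `φ` with the `e`-th coordinate, and
`q_e(x) := ∑_{j=1}^4 ℓ_e(x⁽ʲ⁾)²` the Feynman quadrics of `G` on `ℝ^{4n}`.  Then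
`∫⁻_{1 ≤ ‖x‖ ≤ 2} (∏_e q_e(x))⁻¹ dx < ∞` if and only if every nonempty proper
subset `S ⊊ E` satisfies `#S > 2·h_1(S)`. -/
theorem feynman_period_converges_iff_primitive_log_divergent
    (G : SimpleGraph V) [Fintype G.edgeSet] (hG : G.Connected)
    (n : ℕ) (hn : 1 ≤ n)
    (hloops : Module.finrank ℚ ↥(LinearMap.ker (boundary ℚ G)) = n)
    (hedges : Fintype.card G.edgeSet = 2 * n)
    (φ : (Fin n → ℝ) ≃ₗ[ℝ] ↥(LinearMap.ker (boundary ℝ G))) :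
    (∫⁻ x in {x : Fin 4 → Fin n → ℝ | 1 ≤ ‖x‖ ∧ ‖x‖ ≤ 2},
        (∏ e : G.edgeSet,
          ENNReal.ofReal (∑ j : Fin 4, ((φ (x j) : G.edgeSet → ℝ) e) ^ 2))⁻¹) < ⊤
      ↔ ∀ S : Set (Sym2 V), S ⊆ G.edgeSet → S.Nonempty → S ≠ G.edgeSet →
          2 * h1S G S < S.toFinite.toFinset.card := by
  have hvol : (volume : Measure (Fin 4 → Fin n → ℝ)).IsAddHaarMeasure :=
    Measure.pi.isAddHaarMeasure _
  refine (feynman_period_converges_iff_primitive_log_divergent_general (J := Fin 4) G volume φ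
    (by simp only [Fintype.card_fin, Module.finrank_fin_fun]; omega) one_pos one_lt_two).trans
    (forall₄_congr fun S _ _ _ => ?_)
  rw [Fintype.card_fin, Set.ncard_eq_toFinset_card S]
  omega
end

section
/- Let R be a commutative ring, n ≥ 2, and M an n×n matrix over R. For subsets S, T ⊆ {1,…,n} of equal size let M(S,T) denote the square matrix obtained from M by deleting the rows with index in S and the columns with index in T (the determinant of the empty 0×0 matrix being 1). Then det M({1,2},{1,2}) · det M − det M({1},{1}) · det M({2},{2}) = − det M({1},{2}) · det M({2},{1}). -/
/-!
Multiplying `M` by its adjugate, with the last block column of the adjugate replaced by that of the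
identity, gives a block triangular matrix. Comparing determinants yields, up to a factor `det M`,
Jacobi's formula for a principal minor of the adjugate in terms of the complementary minor of `M`.
The factor cancels for the generic matrix over `ℤ`, whose determinant is a nonzero element of a
domain, and the formula then specializes to every commutative ring. For a `2 × 2` minor it is
Dodgson's identity, the entries of the adjugate being signed first minors of `M`.
-/

section JacobiComplementaryMinor

open Matrix

variable {m n R : Type*} [Fintype m] [DecidableEq m] [Fintype n] [DecidableEq n] [CommRing R]

theorem mul_fromBlocks_adjugate (M : Matrix (m ⊕ n) (m ⊕ n) R) :
    M * fromBlocks M.adjugate.toBlocks₁₁ 0 M.adjugate.toBlocks₂₁ 1 =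
      fromBlocks (M.det • 1) M.toBlocks₁₂ 0 M.toBlocks₂₂ := by
  have blocks_mul_adjugate :
      fromBlocks M.toBlocks₁₁ M.toBlocks₁₂ M.toBlocks₂₁ M.toBlocks₂₂ *
          fromBlocks M.adjugate.toBlocks₁₁ M.adjugate.toBlocks₁₂
            M.adjugate.toBlocks₂₁ M.adjugate.toBlocks₂₂ =
        fromBlocks (M.det • 1) 0 0 (M.det • 1) := by
    rw [fromBlocks_toBlocks, fromBlocks_toBlocks, mul_adjugate, ← fromBlocks_one, fromBlocks_smul,
      smul_zero, smul_zero]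
  rw [fromBlocks_multiply, fromBlocks_inj] at blocks_mul_adjugate
  obtain ⟨block₁₁, -, block₂₁, -⟩ := blocks_mul_adjugate
  nth_rw 1 [← fromBlocks_toBlocks M]
  rw [fromBlocks_multiply, block₁₁, block₂₁]
  simp only [Matrix.mul_zero, Matrix.mul_one, zero_add]

theorem det_mul_det_toBlocks₁₁_adjugate (M : Matrix (m ⊕ n) (m ⊕ n) R) :
    M.det * M.adjugate.toBlocks₁₁.det = M.det ^ Fintype.card m * M.toBlocks₂₂.det := by
  simpa only [det_mul, det_fromBlocks_zero₁₂, det_fromBlocks_zero₂₁, det_smul, det_one, mul_one]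
    using congrArg det (mul_fromBlocks_adjugate M)

theorem det_toBlocks₁₁_adjugate [Nonempty m] (M : Matrix (m ⊕ n) (m ⊕ n) R) :
    M.adjugate.toBlocks₁₁.det = M.det ^ (Fintype.card m - 1) * M.toBlocks₂₂.det := by
  let X := mvPolynomialX (m ⊕ n) (m ⊕ n) ℤ
  have generic : X.adjugate.toBlocks₁₁.det = X.det ^ (Fintype.card m - 1) * X.toBlocks₂₂.det := by
    apply mul_left_cancel₀ (det_mvPolynomialX_ne_zero (m ⊕ n) ℤ)
    rw [det_mul_det_toBlocks₁₁_adjugate, ← mul_assoc, mul_pow_sub_one Fintype.card_ne_zero]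
  let evalM : MvPolynomial ((m ⊕ n) × (m ⊕ n)) ℤ →ₐ[ℤ] R := MvPolynomial.aeval fun p => M p.1 p.2
  have evalM_X : evalM.mapMatrix X = M := mvPolynomialX_mapMatrix_aeval ℤ M
  have evalM_adjugate : evalM.mapMatrix X.adjugate = M.adjugate := by
    rw [AlgHom.map_adjugate, evalM_X]
  calc
    M.adjugate.toBlocks₁₁.det = evalM X.adjugate.toBlocks₁₁.det := by
      rw [AlgHom.map_det, ← evalM_adjugate]; rfl
    _ = evalM X.det ^ (Fintype.card m - 1) * evalM X.toBlocks₂₂.det := by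
      rw [generic, map_mul, map_pow]
    _ = M.det ^ (Fintype.card m - 1) * M.toBlocks₂₂.det := by
      rw [AlgHom.map_det, AlgHom.map_det, evalM_X, ← evalM_X]; rfl

theorem adjugate_mul_adjugate_sub_adjugate_mul_adjugate (e : Fin 2 ⊕ n ≃ m) (M : Matrix m m R) :
    M.adjugate (e (.inl 0)) (e (.inl 0)) * M.adjugate (e (.inl 1)) (e (.inl 1)) -
        M.adjugate (e (.inl 0)) (e (.inl 1)) * M.adjugate (e (.inl 1)) (e (.inl 0)) =
      M.det * (M.submatrix (e ∘ .inr) (e ∘ .inr)).det := by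
  have jacobi := det_toBlocks₁₁_adjugate (M.submatrix e e)
  rw [adjugate_submatrix_equiv_self, det_fin_two, det_submatrix_equiv_self, Fintype.card_fin,
    pow_one] at jacobi
  exact jacobi

end JacobiComplementaryMinor

/-- The bijection placing `Fin 2` as the first two elements of `Fin (m + 2)`; it separates the two
deleted indices from the remaining ones. -/
def finTwoSumFinEquiv (m : ℕ) : Fin 2 ⊕ Fin m ≃ Fin (m + 2) :=
  finSumFinEquiv.trans (finCongr (Nat.add_comm 2 m))

theorem finTwoSumFinEquiv_comp_inr (m : ℕ) :
    finTwoSumFinEquiv m ∘ Sum.inr = fun i => i.succ.succ := by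
  ext i
  simp [finTwoSumFinEquiv]

/-- **Dodgson / Desnanot–Jacobi identity** over a commutative ring.
For an `n × n` matrix `M` (`n = m + 2 ≥ 2`), writing `M(S,T)` for the matrix with the
rows in `S` and columns in `T` deleted (in the paper's 1-based indexing),
`det M({1,2},{1,2}) · det M − det M({1},{1}) · det M({2},{2})
  = − det M({1},{2}) · det M({2},{1})`. -/
theorem dodgson_identity {R : Type} [CommRing R] (m : ℕ)
    (M : Matrix (Fin (m + 2)) (Fin (m + 2)) R) :
    (M.submatrix (fun i : Fin m => i.succ.succ) (fun j : Fin m => j.succ.succ)).det * M.det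
      - (M.submatrix Fin.succ Fin.succ).det *
          (M.submatrix (Fin.succAbove 1) (Fin.succAbove 1)).det
      = -((M.submatrix Fin.succ (Fin.succAbove 1)).det *
          (M.submatrix (Fin.succAbove 1) Fin.succ).det) := by
  have adjugate_minor : M.adjugate 0 0 * M.adjugate 1 1 - M.adjugate 0 1 * M.adjugate 1 0 =
      M.det * (M.submatrix (fun i : Fin m => i.succ.succ) (fun j => j.succ.succ)).det := by
    rw [← finTwoSumFinEquiv_comp_inr]
    exact adjugate_mul_adjugate_sub_adjugate_mul_adjugate (finTwoSumFinEquiv m) M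
  simp only [Matrix.adjugate_fin_succ_eq_det_submatrix, Fin.succAbove_zero, Fin.val_zero,
    Fin.val_one] at adjugate_minor
  linear_combination -adjugate_minor
end

section
/- For n ≥ 3 let WS_n (the wheel with n spokes) be the simple graph with vertex set {0,1,…,n} in which vertex 0 is adjacent to each of 1,…,n, vertex i is adjacent to vertex i+1 for 1 ≤ i ≤ n−1, and vertex n is adjacent to vertex 1. Then: (1) WS_n has exactly 2n edges; (2) h_1(WS_n) = n; and (3) every nonempty proper subset S ⊊ E of the edge set satisfies #S > 2·h_1(S), i.e., every proper subgraph of WS_n is convergent, so WS_n is primitive log divergent. -/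
open scoped BigOperators

variable {V : Type} [Fintype V] [LinearOrder V]

/-- The wheel with `n` spokes: vertices `0, 1, …, n`, with `0` adjacent to each of
`1, …, n`, vertex `i` adjacent to `i + 1` for `1 ≤ i ≤ n − 1`, and vertex `n`
adjacent to vertex `1`. -/
def wheel (n : ℕ) : SimpleGraph (Fin (n + 1)) :=
  SimpleGraph.fromRel (fun i j =>
    (i = 0 ∧ j ≠ 0) ∨
    (i ≠ 0 ∧ j ≠ 0 ∧ ((j : ℕ) = (i : ℕ) + 1 ∨ ((i : ℕ) = n ∧ (j : ℕ) = 1))))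

noncomputable instance (n : ℕ) : Fintype (wheel n).edgeSet := Fintype.ofFinite _

/-!
The support of a cycle (an element of `ker ∂`) has no vertex of degree one, so a set of edges all
of whose leafless subsets are empty has `h₁ = 0`; and deleting an edge lowers `h₁` by at most one.

Let `S` consist of `s` spokes and `r` rim edges. The spokes alone form a star, so deleting the rim
edges of `S` gives `h₁(S) ≤ r`. If a rim edge is missing from `S`, then deleting all but one of the
spokes leaves a forest, so `h₁(S) ≤ s - 1`, or `h₁(S) = 0` when `s = 0`; if none is missing, one
more deletion is needed and the bound grows by one. Comparing these bounds with `#S = s + r` proves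
convergence. For `S = E` the bound `h₁ ≤ r = n` is attained because `h₁ ≥ #E - #V + 1`.
-/

theorem finrank_le_finrank_inf_ker_add_finrank {K M N : Type*} [Field K] [AddCommGroup M]
    [Module K M] [FiniteDimensional K M] [AddCommGroup N] [Module K N] [FiniteDimensional K N]
    (W : Submodule K M) (φ : M →ₗ[K] N) :
    Module.finrank K W ≤
      Module.finrank K ↥(W ⊓ LinearMap.ker φ) + Module.finrank K N := by
  have sup_add_inf := Submodule.finrank_sup_add_finrank_inf_eq W (LinearMap.ker φ)
  have sup_le := (W ⊔ LinearMap.ker φ).finrank_le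
  have rank_nullity := φ.finrank_range_add_finrank_ker
  have range_le := (LinearMap.range φ).finrank_le
  omega

theorem val_finRotate {n : ℕ} (i : Fin n) :
    (finRotate n i : ℕ) = if (i : ℕ) + 1 = n then 0 else (i : ℕ) + 1 := by
  cases n with
  | zero => exact i.elim0
  | succ m => simp only [coe_finRotate, Fin.ext_iff, Fin.val_last, Nat.add_right_cancel_iff]

theorem forall_of_forall_finRotate {n : ℕ} {p : Fin n → Prop} {k : Fin n} (hk : p k)
    (step : ∀ i, p i → p (finRotate n i)) (i : Fin n) : p i := by
  have := k.neZero
  have reach : (finRotate n)^[(i - k : Fin n).1] k = i := by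
    rw [← finCycle_eq_finRotate_iterate, finCycle_apply, add_sub_cancel]
  exact reach ▸ Function.Iterate.rec p hk step _

/-- A set of edges is leafless if no vertex lies on exactly one of its edges. Supports of cycles
have this property, which is all that is used about them in bounding `h1S` from above. -/
def IsLeafless {α : Type*} (C : Set (Sym2 α)) : Prop :=
  ∀ e ∈ C, ∀ v ∈ e, ∃ e' ∈ C, e' ≠ e ∧ v ∈ e'

section Boundary

variable {α : Type} [LinearOrder α] {R : Type} [CommRing R]

theorem incSign_eq_zero_of_notMem {v : α} {e : Sym2 α} (hv : v ∉ e) : incSign R v e = 0 := by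
  induction e using Sym2.ind with | _ a b
  rw [Sym2.mem_iff, not_or] at hv
  rcases le_total a b with hab | hab <;> simp [incSign, hab, hv.1, hv.2]

theorem isUnit_incSign_of_mem {v : α} {e : Sym2 α} (he : ¬ e.IsDiag) (hv : v ∈ e) :
    IsUnit (incSign R v e) := by
  induction e using Sym2.ind with | _ a b
  rw [Sym2.mk_isDiag_iff] at he
  rcases lt_or_gt_of_ne he with hab | hab <;> rcases Sym2.mem_iff.1 hv with rfl | rfl <;>
    simp [incSign, hab.le, hab.ne, hab.ne']

variable {G : SimpleGraph α} [Fintype G.edgeSet]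

theorem boundary_apply (f : G.edgeSet → R) (v : α) :
    boundary R G f v = ∑ e : G.edgeSet, incSign R v e * f e :=
  rfl

theorem sum_boundary [Fintype α] (f : G.edgeSet → R) : ∑ v, boundary R G f v = 0 := by
  simp only [boundary_apply]
  rw [Finset.sum_comm]
  simp [← Finset.sum_mul, incSign]

theorem isLeafless_support {f : G.edgeSet → R} (hf : boundary R G f = 0) :
    IsLeafless (Subtype.val '' Function.support f) := by
  rintro _ ⟨e, he, rfl⟩ v hv
  by_contra! leaf
  have single_term : boundary R G f v = incSign R v e * f e := by
    rw [boundary_apply]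
    refine Finset.sum_eq_single e (fun e' _ hne => ?_) (by simp)
    by_cases he' : f e' = 0
    · rw [he', mul_zero]
    · rw [incSign_eq_zero_of_notMem (leaf e' ⟨e', he', rfl⟩ (Subtype.coe_ne_coe.2 hne)), zero_mul]
  rw [hf, Pi.zero_apply, eq_comm,
    (isUnit_incSign_of_mem (G.not_isDiag_of_mem_edgeSet e.2) hv).mul_right_eq_zero] at single_term
  exact he single_term

theorem card_edgeSet_lt_finrank_ker_boundary_add_card (K : Type) [Field K] [Fintype α]
    [Nonempty α] (G : SimpleGraph α) [Fintype G.edgeSet] :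
    Fintype.card G.edgeSet < Module.finrank K (LinearMap.ker (boundary K G)) + Fintype.card α := by
  have range_ne_top : LinearMap.range (boundary K G) ≠ ⊤ := by
    intro range_eq
    obtain ⟨f, hf⟩ := LinearMap.range_eq_top.1 range_eq (Pi.single (Classical.arbitrary α) 1)
    simpa [hf] using sum_boundary f
  have range_lt := Submodule.finrank_lt range_ne_top
  have rank_nullity := (boundary K G).finrank_range_add_finrank_ker
  rw [Module.finrank_fintype_fun_eq_card] at range_lt rank_nullity
  omega

end Boundary

section FirstBetti

variable {α : Type} [LinearOrder α] {G : SimpleGraph α} [Fintype G.edgeSet] {S : Set (Sym2 α)}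

variable (G) in
theorem h1S_edgeSet : h1S G G.edgeSet = Module.finrank ℚ (LinearMap.ker (boundary ℚ G)) := by
  have supportedIn_eq_top : supportedIn ℚ G G.edgeSet = ⊤ :=
    eq_top_iff.2 fun _ _ e he => absurd e.2 he
  rw [h1S, supportedIn_eq_top, inf_top_eq]

theorem h1S_eq_zero_of_forall_isLeafless
    (h : ∀ C ⊆ S, C ⊆ G.edgeSet → IsLeafless C → C = ∅) : h1S G S = 0 := by
  rw [h1S, Submodule.finrank_eq_zero, Submodule.eq_bot_iff]
  rintro f ⟨cycle, supported⟩
  have support_subset : Subtype.val '' Function.support f ⊆ S := by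
    rintro _ ⟨e, he, rfl⟩
    exact not_imp_comm.1 (supported e) he
  have support_empty := h _ support_subset (by simp) (isLeafless_support cycle)
  rwa [Set.image_eq_empty, Function.support_eq_empty_iff] at support_empty

theorem h1S_le_h1S_sdiff_add_ncard {X : Set (Sym2 α)} (hX : X.Finite) :
    h1S G S ≤ h1S G (S \ X) + X.ncard := by
  let Y : Set G.edgeSet := Subtype.val ⁻¹' X
  have := Fintype.ofFinite Y
  let restrict : (G.edgeSet → ℚ) →ₗ[ℚ] (Y → ℚ) := LinearMap.funLeft ℚ ℚ Subtype.val
  have inf_ker_le : (LinearMap.ker (boundary ℚ G) ⊓ supportedIn ℚ G S) ⊓ LinearMap.ker restrict ≤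
      LinearMap.ker (boundary ℚ G) ⊓ supportedIn ℚ G (S \ X) := by
    rintro f ⟨⟨cycle, supported⟩, vanish⟩
    refine ⟨cycle, fun e he => ?_⟩
    by_cases heX : (e : Sym2 α) ∈ X
    · exact congrFun vanish ⟨e, heX⟩
    · exact supported e fun heS => he ⟨heS, heX⟩
  have finrank_codomain_le : Module.finrank ℚ (Y → ℚ) ≤ X.ncard := by
    rw [Module.finrank_fintype_fun_eq_card, ← Nat.card_eq_fintype_card, Nat.card_coe_set_eq]
    exact Set.ncard_le_ncard_of_injOn _ (fun _ hy => hy) Subtype.val_injective.injOn hX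
  calc h1S G S
      ≤ _ + Module.finrank ℚ (Y → ℚ) := finrank_le_finrank_inf_ker_add_finrank _ restrict
    _ ≤ h1S G (S \ X) + X.ncard :=
      add_le_add (Submodule.finrank_mono inf_ker_le) finrank_codomain_le

end FirstBetti

namespace wheel

variable {n : ℕ}

/-- The edge of `wheel n` joining the hub `0` to the vertex `i + 1`. -/
def spoke (i : Fin n) : Sym2 (Fin (n + 1)) := s(0, i.succ)

/-- The edge of `wheel n` joining the vertex `i + 1` to its successor on the rim; the rotation
`finRotate n` of the indices makes the last rim edge `s(n, 1)`. -/
def rimEdge (i : Fin n) : Sym2 (Fin (n + 1)) := s(i.succ, (finRotate n i).succ)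

theorem zero_notMem_rimEdge (i : Fin n) : 0 ∉ rimEdge i := by
  simp [rimEdge, (Fin.succ_ne_zero _).symm]

theorem succ_mem_spoke_iff {i j : Fin n} : i.succ ∈ spoke j ↔ i = j := by
  simp [spoke]

theorem succ_mem_rimEdge_iff {i j : Fin n} : i.succ ∈ rimEdge j ↔ i = j ∨ i = finRotate n j := by
  simp [rimEdge]

theorem spoke_injective : Function.Injective (spoke (n := n)) := fun _ _ h =>
  succ_mem_spoke_iff.1 (h ▸ succ_mem_spoke_iff.2 rfl)

theorem rimEdge_injective (hn : 3 ≤ n) : Function.Injective (rimEdge (n := n)) := by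
  intro i j h
  have hi := val_finRotate i
  have hj := val_finRotate j
  simp only [rimEdge, Sym2.eq_iff, Fin.ext_iff, Fin.val_succ] at h ⊢
  grind

theorem spoke_ne_rimEdge (i j : Fin n) : spoke i ≠ rimEdge j := fun h =>
  zero_notMem_rimEdge j (h ▸ Sym2.mem_mk_left 0 i.succ)

theorem spoke_mem_edgeSet (i : Fin n) : spoke i ∈ (wheel n).edgeSet := by
  simp [spoke, wheel, (Fin.succ_ne_zero i).symm]

theorem rimEdge_mem_edgeSet (hn : 2 ≤ n) (i : Fin n) : rimEdge i ∈ (wheel n).edgeSet := by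
  have hi := val_finRotate i
  simp only [rimEdge, wheel, SimpleGraph.mem_edgeSet, SimpleGraph.fromRel_adj, ne_eq,
    Fin.ext_iff, Fin.val_succ, Fin.val_zero]
  grind

theorem exists_eq_spoke_or_eq_rimEdge {e : Sym2 (Fin (n + 1))} (he : e ∈ (wheel n).edgeSet) :
    (∃ i, e = spoke i) ∨ ∃ i, e = rimEdge i := by
  induction e using Sym2.ind with | _ u v
  wlog rel : (u = 0 ∧ v ≠ 0) ∨
    (u ≠ 0 ∧ v ≠ 0 ∧ ((v : ℕ) = (u : ℕ) + 1 ∨ ((u : ℕ) = n ∧ (v : ℕ) = 1))) generalizing u v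
  · rw [Sym2.eq_swap]
    have adj : (wheel n).Adj u v := he
    exact this v u adj.symm (((SimpleGraph.fromRel_adj _ u v).1 adj).2.resolve_left rel)
  rcases rel with ⟨rfl, hv⟩ | ⟨hu, hv, consecutive⟩
  · exact .inl ⟨v.pred hv, by simp [spoke]⟩
  · obtain ⟨i, rfl⟩ := Fin.exists_succ_eq.2 hu
    obtain ⟨j, rfl⟩ := Fin.exists_succ_eq.2 hv
    have hi := val_finRotate i
    have next : finRotate n i = j := by
      simp only [Fin.ext_iff, Fin.val_succ] at consecutive ⊢
      grind
    exact .inr ⟨i, by rw [rimEdge, next]⟩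

theorem ncard_eq_of_subset_edgeSet (hn : 3 ≤ n) {S : Set (Sym2 (Fin (n + 1)))}
    (hS : S ⊆ (wheel n).edgeSet) : S.ncard = (spoke ⁻¹' S).ncard + (rimEdge ⁻¹' S).ncard := by
  have decomposition : S = spoke '' (spoke ⁻¹' S) ∪ rimEdge '' (rimEdge ⁻¹' S) := by
    refine subset_antisymm (fun e he => ?_) (by simp)
    rcases exists_eq_spoke_or_eq_rimEdge (hS he) with ⟨i, rfl⟩ | ⟨i, rfl⟩
    · exact .inl ⟨i, he, rfl⟩
    · exact .inr ⟨i, he, rfl⟩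
  have disjoint : Disjoint (spoke '' (spoke ⁻¹' S)) (rimEdge '' (rimEdge ⁻¹' S)) := by
    rw [Set.disjoint_left]
    rintro _ ⟨i, -, rfl⟩ ⟨j, -, h⟩
    exact spoke_ne_rimEdge i j h.symm
  conv_lhs => rw [decomposition]
  rw [Set.ncard_union_eq disjoint, Set.ncard_image_of_injective _ spoke_injective,
    Set.ncard_image_of_injective _ (rimEdge_injective hn)]

theorem ncard_edgeSet (hn : 3 ≤ n) : (wheel n).edgeSet.ncard = 2 * n := by
  have spokes : spoke ⁻¹' (wheel n).edgeSet = Set.univ := Set.eq_univ_of_forall spoke_mem_edgeSet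
  have rim : rimEdge ⁻¹' (wheel n).edgeSet = Set.univ :=
    Set.eq_univ_of_forall (rimEdge_mem_edgeSet (by omega))
  rw [ncard_eq_of_subset_edgeSet hn subset_rfl, spokes, rim, Set.ncard_univ, Nat.card_fin, two_mul]

section Leafless

variable {C : Set (Sym2 (Fin (n + 1)))}

theorem eq_empty_of_forall_rimEdge_notMem (hC : C ⊆ (wheel n).edgeSet) (leafless : IsLeafless C)
    (hrim : ∀ i, rimEdge i ∉ C) : C = ∅ := by
  refine Set.eq_empty_of_forall_notMem fun e he => ?_
  obtain ⟨i, rfl⟩ | ⟨i, rfl⟩ := exists_eq_spoke_or_eq_rimEdge (hC he)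
  · obtain ⟨e', he', hne, hmem⟩ := leafless _ he i.succ (succ_mem_spoke_iff.2 rfl)
    obtain ⟨j, rfl⟩ | ⟨j, rfl⟩ := exists_eq_spoke_or_eq_rimEdge (hC he')
    · exact hne (congrArg spoke (succ_mem_spoke_iff.1 hmem).symm)
    · exact hrim j he'
  · exact hrim i he

theorem spoke_notMem_of_subsingleton (hC : C ⊆ (wheel n).edgeSet) (leafless : IsLeafless C)
    (hspoke : (spoke ⁻¹' C).Subsingleton) (i : Fin n) : spoke i ∉ C := by
  intro he
  obtain ⟨e', he', hne, hmem⟩ := leafless _ he 0 (Sym2.mem_mk_left 0 i.succ)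
  obtain ⟨j, rfl⟩ | ⟨j, rfl⟩ := exists_eq_spoke_or_eq_rimEdge (hC he')
  · exact hne (congrArg spoke (hspoke he' he))
  · exact zero_notMem_rimEdge j hmem

theorem rimEdge_finRotate_notMem (hC : C ⊆ (wheel n).edgeSet) (leafless : IsLeafless C)
    (hspoke : ∀ i, spoke i ∉ C) {i : Fin n} (hi : rimEdge i ∉ C) :
    rimEdge (finRotate n i) ∉ C := by
  intro he
  obtain ⟨e', he', hne, hmem⟩ :=
    leafless _ he (finRotate n i).succ (succ_mem_rimEdge_iff.2 (.inl rfl))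
  obtain ⟨j, rfl⟩ | ⟨j, rfl⟩ := exists_eq_spoke_or_eq_rimEdge (hC he')
  · exact hspoke j he'
  · rcases succ_mem_rimEdge_iff.1 hmem with rfl | h
    · exact hne rfl
    · exact hi ((finRotate n).injective h ▸ he')

theorem eq_empty_of_subsingleton_of_rimEdge_notMem (hC : C ⊆ (wheel n).edgeSet)
    (leafless : IsLeafless C) (hspoke : (spoke ⁻¹' C).Subsingleton)
    {k : Fin n} (hk : rimEdge k ∉ C) : C = ∅ :=
  have no_spoke := spoke_notMem_of_subsingleton hC leafless hspoke
  eq_empty_of_forall_rimEdge_notMem hC leafless <|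
    forall_of_forall_finRotate hk fun _ => rimEdge_finRotate_notMem hC leafless no_spoke

end Leafless

section Bounds

variable {S : Set (Sym2 (Fin (n + 1)))}

variable (S) in
theorem h1S_le_ncard_rimEdge : h1S (wheel n) S ≤ (rimEdge ⁻¹' S).ncard := by
  let X := rimEdge '' (rimEdge ⁻¹' S)
  have acyclic : h1S (wheel n) (S \ X) = 0 :=
    h1S_eq_zero_of_forall_isLeafless fun C hCS hC leafless =>
      eq_empty_of_forall_rimEdge_notMem hC leafless fun i hi =>
        (hCS hi).2 ⟨i, (hCS hi).1, rfl⟩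
  calc h1S (wheel n) S
      ≤ h1S (wheel n) (S \ X) + X.ncard := h1S_le_h1S_sdiff_add_ncard X.toFinite
    _ ≤ (rimEdge ⁻¹' S).ncard := by
      rw [acyclic, zero_add]
      exact Set.ncard_image_le

theorem h1S_eq_zero_of_subsingleton_spoke (hspoke : (spoke ⁻¹' S).Subsingleton)
    {k : Fin n} (hk : rimEdge k ∉ S) : h1S (wheel n) S = 0 :=
  h1S_eq_zero_of_forall_isLeafless fun _ hCS hC leafless =>
    eq_empty_of_subsingleton_of_rimEdge_notMem hC leafless
      (hspoke.anti (Set.preimage_mono hCS)) fun hkC => hk (hCS hkC)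

-- The subtraction truncates: a set without spokes gets the bound `0`, not `-1`.
theorem h1S_le_ncard_spoke_sub_one {k : Fin n} (hk : rimEdge k ∉ S) :
    h1S (wheel n) S ≤ (spoke ⁻¹' S).ncard - 1 := by
  obtain no_spoke | ⟨t, ht⟩ := (spoke ⁻¹' S).eq_empty_or_nonempty
  · simp [h1S_eq_zero_of_subsingleton_spoke (no_spoke ▸ Set.subsingleton_empty) hk]
  let X := spoke '' (spoke ⁻¹' S \ {t})
  have only_t : spoke ⁻¹' (S \ X) ⊆ {t} := fun i hi => by
    by_contra hit
    exact hi.2 ⟨i, ⟨hi.1, hit⟩, rfl⟩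
  have acyclic : h1S (wheel n) (S \ X) = 0 :=
    h1S_eq_zero_of_subsingleton_spoke (Set.subsingleton_singleton.anti only_t)
      fun hkS => hk hkS.1
  calc h1S (wheel n) S
      ≤ h1S (wheel n) (S \ X) + X.ncard := h1S_le_h1S_sdiff_add_ncard X.toFinite
    _ ≤ (spoke ⁻¹' S \ {t}).ncard := by
      rw [acyclic, zero_add]
      exact Set.ncard_image_le
    _ = (spoke ⁻¹' S).ncard - 1 := Set.ncard_sdiff_singleton_of_mem ht

variable (S) in
theorem h1S_le_ncard_spoke_sub_one_add_one (hn : 0 < n) :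
    h1S (wheel n) S ≤ (spoke ⁻¹' S).ncard - 1 + 1 := by
  let k : Fin n := ⟨0, hn⟩
  have same_spokes : spoke ⁻¹' (S \ {rimEdge k}) = spoke ⁻¹' S := by
    ext i
    simp [spoke_ne_rimEdge]
  calc h1S (wheel n) S
      ≤ h1S (wheel n) (S \ {rimEdge k}) + 1 := by
        simpa using h1S_le_h1S_sdiff_add_ncard (G := wheel n) (S := S)
          (Set.finite_singleton (rimEdge k))
    _ ≤ (spoke ⁻¹' S).ncard - 1 + 1 := by
      rw [← same_spokes]
      exact Nat.add_le_add_right (h1S_le_ncard_spoke_sub_one (k := k) (by simp)) 1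

end Bounds

theorem finrank_ker_boundary (hn : 3 ≤ n) :
    Module.finrank ℚ (LinearMap.ker (boundary ℚ (wheel n))) = n := by
  apply le_antisymm
  · calc Module.finrank ℚ (LinearMap.ker (boundary ℚ (wheel n)))
        = h1S (wheel n) (wheel n).edgeSet := (h1S_edgeSet _).symm
      _ ≤ (rimEdge ⁻¹' (wheel n).edgeSet).ncard := h1S_le_ncard_rimEdge _
      _ ≤ n := by simpa using Set.ncard_le_card (rimEdge ⁻¹' (wheel n).edgeSet)
  · have euler := card_edgeSet_lt_finrank_ker_boundary_add_card ℚ (wheel n)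
    rw [← Nat.card_eq_fintype_card, Nat.card_coe_set_eq, ncard_edgeSet hn,
      Fintype.card_fin] at euler
    omega

theorem two_mul_h1S_lt_ncard (hn : 3 ≤ n) {S : Set (Sym2 (Fin (n + 1)))}
    (hS : S ⊂ (wheel n).edgeSet) (nonempty : S.Nonempty) : 2 * h1S (wheel n) S < S.ncard := by
  have card_S := ncard_eq_of_subset_edgeSet hn hS.subset
  have card_pos := nonempty.ncard_pos
  have card_lt := ncard_edgeSet hn ▸ Set.ncard_lt_ncard hS
  have le_rim := h1S_le_ncard_rimEdge S
  by_cases full_rim : ∀ k, rimEdge k ∈ S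
  · have card_rim : (rimEdge ⁻¹' S).ncard = n := by
      rw [Set.preimage_eq_univ_iff.2 (Set.range_subset_iff.2 full_rim), Set.ncard_univ,
        Nat.card_fin]
    have le_spokes := h1S_le_ncard_spoke_sub_one_add_one S (by omega)
    omega
  · obtain ⟨k, hk⟩ := not_forall.1 full_rim
    have le_spokes := h1S_le_ncard_spoke_sub_one hk
    omega

end wheel

/-- **The wheel with `n ≥ 3` spokes is primitive log divergent** (Lemma 11.1 of
Bloch–Esnault–Kreimer): `WS_n` has `2n` edges, `h_1(WS_n) = n`, and every nonempty
proper subset `S ⊊ E` of edges satisfies `#S > 2·h_1(S)` (all proper subgraphs are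
convergent). -/
theorem wheel_primitive_log_divergent (n : ℕ) (hn : 3 ≤ n) :
    Fintype.card (wheel n).edgeSet = 2 * n ∧
    Module.finrank ℚ ↥(LinearMap.ker (boundary ℚ (wheel n))) = n ∧
    ∀ S : Set (Sym2 (Fin (n + 1))), S ⊆ (wheel n).edgeSet → S.Nonempty →
      S ≠ (wheel n).edgeSet → 2 * h1S (wheel n) S < S.toFinite.toFinset.card := by
  refine ⟨?_, wheel.finrank_ker_boundary hn, fun S hS nonempty proper => ?_⟩
  · rw [← Nat.card_eq_fintype_card, Nat.card_coe_set_eq, wheel.ncard_edgeSet hn]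
  · rw [← Set.ncard_eq_toFinset_card]
    exact wheel.two_mul_h1S_lt_ncard hn (hS.ssubset_of_ne proper) nonempty
end

section
/- Let R be a commutative ring and n ≥ 3. Let M be the n×n matrix over R with rows and columns indexed by 0,…,n−1, with entries M_{i,i} = B_i for 0 ≤ i ≤ n−1, M_{i,i+1} = M_{i+1,i} = A_i for 0 ≤ i ≤ n−2, M_{0,n−1} = M_{n−1,0} = A_{n−1}, and all other entries 0. Then det M = B_0·Q_{n−1}(B_1,…,B_{n−1}; A_1,…,A_{n−2}) − A_0²·Q_{n−2}(B_2,…,B_{n−1}; A_2,…,A_{n−2}) − A_{n−1}²·Q_{n−2}(B_1,…,B_{n−2}; A_1,…,A_{n−3}) + 2·(−1)^{n−1}·A_0·A_1·⋯·A_{n−1}. -/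
/-- `Qtri n B A` is the determinant of the `n × n` symmetric tridiagonal matrix with
diagonal entries `B 1, …, B n` and off-diagonal entries `A 1, …, A (n-1)`
(so `Qtri 0 B A = 1` by convention). -/
def Qtri {R : Type} [CommRing R] (n : ℕ) (B A : ℕ → R) : R :=
  Matrix.det (Matrix.of fun i j : Fin n =>
    if (i : ℕ) = (j : ℕ) then B ((i : ℕ) + 1)
    else if (i : ℕ) + 1 = (j : ℕ) then A ((i : ℕ) + 1)
    else if (j : ℕ) + 1 = (i : ℕ) then A ((j : ℕ) + 1)
    else 0)

/- Deleting row and column `0` of the wheel matrix leaves a tridiagonal matrix `T`, and Laplace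
expansion along both gives `det M = M₀₀ det T - r ⬝ᵥ adj T *ᵥ c`, where `r` and `c` are the rest of
row and column `0`. As `r` and `c` are supported on the first and last index, only the four corner
entries of `adj T` contribute: the two on the diagonal are tridiagonal determinants, and the other
two are, up to sign, determinants of triangular matrices. These last two contributions are the two
orientations of the `n`-cycle, which is why the product of the `Aᵢ` occurs twice. -/

open Matrix

section Bordered

variable {R : Type*} [CommRing R]

theorem det_succ_eq_sub_dotProduct_adjugate_mulVec {n : ℕ}
    (M : Matrix (Fin (n + 1)) (Fin (n + 1)) R) :
    M.det = M 0 0 * (M.submatrix Fin.succ Fin.succ).det -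
      (fun j : Fin n => M 0 j.succ) ⬝ᵥ
        (M.submatrix Fin.succ Fin.succ).adjugate *ᵥ fun i : Fin n => M i.succ 0 := by
  cases n with
  | zero => simp
  | succ n =>
    have minor_expansion (j : Fin (n + 1)) :
        (-1) ^ (j : ℕ) * (M.submatrix Fin.succ j.succ.succAbove).det =
          ((M.submatrix Fin.succ Fin.succ).adjugate *ᵥ fun i => M i.succ 0) j := by
      rw [det_succ_column_zero, Finset.mul_sum]
      refine Finset.sum_congr rfl fun i _ => ?_
      simp only [adjugate_fin_succ_eq_det_submatrix, submatrix_apply, submatrix_submatrix,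
        Function.comp_def, Fin.succ_succAbove_zero, Fin.succ_succAbove_succ]
      ring
    rw [det_succ_row_zero, Fin.sum_univ_succ, sub_eq_add_neg, dotProduct, ← Finset.sum_neg_distrib]
    congr 1
    · simp [Fin.succAbove_zero]
    · refine Finset.sum_congr rfl fun j _ => ?_
      rw [← minor_expansion, Fin.val_succ]
      ring

theorem dotProduct_mulVec_single_add_single {m n : Type*} [Fintype m] [Fintype n] [DecidableEq m]
    [DecidableEq n] (N : Matrix m n R) (i i' : m) (j j' : n) (a a' b b' : R) :
    (Pi.single i a + Pi.single i' a') ⬝ᵥ N *ᵥ (Pi.single j b + Pi.single j' b') =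
      a * b * N i j + a * b' * N i j' + a' * b * N i' j + a' * b' * N i' j' := by
  simp only [mulVec_add, mulVec_single, add_dotProduct, single_dotProduct, Pi.add_apply,
    Pi.smul_apply, col_apply, op_smul_eq_mul]
  ring

end Bordered

section Tridiagonal

/-- The `n × n` tridiagonal matrix with diagonal entries `d 0, …, d (n - 1)`, superdiagonal entries
`u 0, …, u (n - 2)` and subdiagonal entries `l 0, …, l (n - 2)`. Its entries are read off sequences,
so that passing to a block of consecutive indices shifts the sequences. -/
def tridiagonal {R : Type*} [Zero R] (n : ℕ) (d u l : ℕ → R) : Matrix (Fin n) (Fin n) R :=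
  of fun i j =>
    if (i : ℕ) = j then d i
    else if (i : ℕ) + 1 = j then u i
    else if (j : ℕ) + 1 = i then l j
    else 0

section Zero

variable {R : Type*} [Zero R] (n : ℕ) (d u l : ℕ → R)

theorem tridiagonal_transpose : (tridiagonal n d u l)ᵀ = tridiagonal n d l u := by
  ext i j
  simp only [tridiagonal, transpose_apply, of_apply]
  grind

theorem tridiagonal_submatrix_succ :
    (tridiagonal (n + 1) d u l).submatrix Fin.succ Fin.succ =
      tridiagonal n (fun k => d (k + 1)) (fun k => u (k + 1)) fun k => l (k + 1) := by
  ext i j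
  simp [tridiagonal]

theorem tridiagonal_submatrix_castSucc :
    (tridiagonal (n + 1) d u l).submatrix Fin.castSucc Fin.castSucc = tridiagonal n d u l := by
  ext i j
  simp [tridiagonal]

theorem isUpperTriangular_tridiagonal_submatrix_succ_castSucc :
    ((tridiagonal (n + 1) d u l).submatrix Fin.succ Fin.castSucc).IsUpperTriangular := by
  intro i j hij
  replace hij : (j : ℕ) < i := hij
  simp [tridiagonal, show (i : ℕ) + 1 ≠ j by lia, show (i : ℕ) + 1 + 1 ≠ j by lia,
    show (j : ℕ) ≠ i by lia]

end Zero

variable {R : Type*} [CommRing R] (n : ℕ) (d u l : ℕ → R)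

theorem det_tridiagonal_submatrix_succ_castSucc :
    ((tridiagonal (n + 1) d u l).submatrix Fin.succ Fin.castSucc).det =
      ∏ i ∈ Finset.range n, l i := by
  rw [det_of_isUpperTriangular (isUpperTriangular_tridiagonal_submatrix_succ_castSucc n d u l),
    ← Fin.prod_univ_eq_prod_range]
  refine Finset.prod_congr rfl fun i _ => ?_
  simp [tridiagonal, show (i : ℕ) + 1 + 1 ≠ i by lia]

theorem adjugate_tridiagonal_zero_zero :
    (tridiagonal (n + 1) d u l).adjugate 0 0 =
      (tridiagonal n (fun k => d (k + 1)) (fun k => u (k + 1)) fun k => l (k + 1)).det := by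
  simp [adjugate_fin_succ_eq_det_submatrix, Fin.succAbove_zero, tridiagonal_submatrix_succ]

theorem adjugate_tridiagonal_last_last :
    (tridiagonal (n + 1) d u l).adjugate (Fin.last n) (Fin.last n) =
      (tridiagonal n d u l).det := by
  simp [adjugate_fin_succ_eq_det_submatrix, Fin.succAbove_last, tridiagonal_submatrix_castSucc]

theorem adjugate_tridiagonal_last_zero :
    (tridiagonal (n + 1) d u l).adjugate (Fin.last n) 0 =
      (-1) ^ n * ∏ i ∈ Finset.range n, l i := by
  simp [adjugate_fin_succ_eq_det_submatrix, Fin.succAbove_zero, Fin.succAbove_last,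
    det_tridiagonal_submatrix_succ_castSucc]

theorem adjugate_tridiagonal_zero_last :
    (tridiagonal (n + 1) d u l).adjugate 0 (Fin.last n) =
      (-1) ^ n * ∏ i ∈ Finset.range n, u i := by
  rw [← adjugate_tridiagonal_last_zero n d l u, ← tridiagonal_transpose, ← adjugate_transpose,
    transpose_apply]

theorem Qtri_eq_det_tridiagonal {R : Type} [CommRing R] (n : ℕ) (B A : ℕ → R) :
    Qtri n B A =
      (tridiagonal n (fun k => B (k + 1)) (fun k => A (k + 1)) fun k => A (k + 1)).det :=
  rfl

end Tridiagonal

section PeriodicTridiagonal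

/-- The `n × n` periodic tridiagonal matrix: the tridiagonal matrix with diagonal `d`, superdiagonal
`u` and subdiagonal `l`, closed up cyclically by the corner entries `u (n - 1)` in position
`(n - 1, 0)` and `l (n - 1)` in position `(0, n - 1)`. For `n ≤ 2` the corners lie on the three
diagonals, whose entries take precedence. -/
def periodicTridiagonal {R : Type*} [Zero R] (n : ℕ) (d u l : ℕ → R) :
    Matrix (Fin n) (Fin n) R :=
  of fun i j =>
    if (i : ℕ) = j then d i
    else if (i : ℕ) + 1 = j then u i
    else if (j : ℕ) + 1 = i then l j
    else if (i : ℕ) = 0 ∧ (j : ℕ) = n - 1 then l (n - 1)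
    else if (j : ℕ) = 0 ∧ (i : ℕ) = n - 1 then u (n - 1)
    else 0

section Zero

variable {R : Type*} [Zero R] (n : ℕ) (d u l : ℕ → R)

theorem periodicTridiagonal_transpose :
    (periodicTridiagonal n d u l)ᵀ = periodicTridiagonal n d l u := by
  ext i j
  simp only [periodicTridiagonal, transpose_apply, of_apply]
  grind

theorem periodicTridiagonal_submatrix_succ :
    (periodicTridiagonal (n + 1) d u l).submatrix Fin.succ Fin.succ =
      tridiagonal n (fun k => d (k + 1)) (fun k => u (k + 1)) fun k => l (k + 1) := by
  ext i j
  simp [periodicTridiagonal, tridiagonal]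

end Zero

theorem periodicTridiagonal_zero_succ {R : Type*} [AddZeroClass R] (n : ℕ) (d u l : ℕ → R) :
    (fun j : Fin (n + 2) => periodicTridiagonal (n + 3) d u l 0 j.succ) =
      Pi.single 0 (u 0) + Pi.single (Fin.last (n + 1)) (l (n + 2)) := by
  ext j
  simp only [periodicTridiagonal, of_apply, Pi.add_apply, Pi.single_apply, Fin.ext_iff,
    Fin.val_succ, Fin.val_zero, Fin.val_last]
  grind [zero_add, add_zero]

theorem periodicTridiagonal_succ_zero {R : Type*} [AddZeroClass R] (n : ℕ) (d u l : ℕ → R) :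
    (fun i : Fin (n + 2) => periodicTridiagonal (n + 3) d u l i.succ 0) =
      Pi.single 0 (l 0) + Pi.single (Fin.last (n + 1)) (u (n + 2)) := by
  rw [← periodicTridiagonal_zero_succ n d l u, ← periodicTridiagonal_transpose]
  rfl

theorem wheel_matrix_det_general {R : Type*} [CommRing R] (n : ℕ) (d u l : ℕ → R) :
    (periodicTridiagonal (n + 3) d u l).det =
      d 0 * (tridiagonal (n + 2) (fun k => d (k + 1)) (fun k => u (k + 1))
          fun k => l (k + 1)).det
        - u 0 * l 0 * (tridiagonal (n + 1) (fun k => d (k + 2)) (fun k => u (k + 2))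
          fun k => l (k + 2)).det
        - u (n + 2) * l (n + 2) * (tridiagonal (n + 1) (fun k => d (k + 1)) (fun k => u (k + 1))
          fun k => l (k + 1)).det
        + (-1) ^ (n + 2) * (∏ i ∈ Finset.range (n + 3), u i + ∏ i ∈ Finset.range (n + 3), l i) := by
  have prod_cycle (f : ℕ → R) : ∏ i ∈ Finset.range (n + 3), f i =
      f 0 * (∏ i ∈ Finset.range (n + 1), f (i + 1)) * f (n + 2) := by
    rw [Finset.prod_range_succ, Finset.prod_range_succ', mul_comm (f 0)]
  have corner : periodicTridiagonal (n + 3) d u l 0 0 = d 0 := by simp [periodicTridiagonal]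
  rw [det_succ_eq_sub_dotProduct_adjugate_mulVec, corner, periodicTridiagonal_submatrix_succ,
    periodicTridiagonal_zero_succ, periodicTridiagonal_succ_zero,
    dotProduct_mulVec_single_add_single, adjugate_tridiagonal_zero_zero,
    adjugate_tridiagonal_zero_last, adjugate_tridiagonal_last_zero,
    adjugate_tridiagonal_last_last, prod_cycle, prod_cycle]
  ring

end PeriodicTridiagonal

/-- **Expansion of the wheel matrix determinant** (eqs. (11.7)–(11.10) of the paper).
For `n ≥ 3`, let `M` be the `n × n` matrix with diagonal `B_0,…,B_{n−1}`,
off-diagonal entries `M_{i,i+1} = M_{i+1,i} = A_i`, corner entries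
`M_{0,n−1} = M_{n−1,0} = A_{n−1}`, and all other entries `0`.  Then
`det M = B_0·Q_{n−1}(B_1,…,B_{n−1}; A_1,…,A_{n−2})
        − A_0²·Q_{n−2}(B_2,…,B_{n−1}; A_2,…,A_{n−2})
        − A_{n−1}²·Q_{n−2}(B_1,…,B_{n−2}; A_1,…,A_{n−3})
        + 2·(−1)^{n−1}·A_0·A_1·⋯·A_{n−1}`. -/
theorem wheel_matrix_det {R : Type} [CommRing R] (n : ℕ) (hn : 3 ≤ n) (B A : ℕ → R) :
    Matrix.det (Matrix.of fun i j : Fin n =>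
        if (i : ℕ) = (j : ℕ) then B (i : ℕ)
        else if (i : ℕ) + 1 = (j : ℕ) then A (i : ℕ)
        else if (j : ℕ) + 1 = (i : ℕ) then A (j : ℕ)
        else if (i : ℕ) = 0 ∧ (j : ℕ) = n - 1 then A (n - 1)
        else if (j : ℕ) = 0 ∧ (i : ℕ) = n - 1 then A (n - 1)
        else 0)
      = B 0 * Qtri (n - 1) B A
        - (A 0) ^ 2 * Qtri (n - 2) (fun k => B (k + 1)) (fun k => A (k + 1))
        - (A (n - 1)) ^ 2 * Qtri (n - 2) B A
        + 2 * (-1 : R) ^ (n - 1) * ∏ i ∈ Finset.range n, A i := by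
  obtain ⟨m, rfl⟩ := Nat.exists_eq_add_of_le' hn
  refine (wheel_matrix_det_general m B A A).trans ?_
  simp only [Qtri_eq_det_tridiagonal, Nat.reduceSubDiff]
  ring
end

section
/- Let R be an integral domain and n ≥ 2. For elements B_1,…,B_n, A_1,…,A_{n−1} of R, the two equations Q_n(B_1,…,B_n; A_1,…,A_{n−1}) = 0 and Q_{n−1}(B_2,…,B_n; A_2,…,A_{n−1}) = 0 hold simultaneously if and only if there exists an index i with 1 ≤ i ≤ n−1 such that A_i = 0 and Q_{n−i}(B_{i+1},…,B_n; A_{i+1},…,A_{n−1}) = 0. -/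
/-!
Write `D i` for `Q_{n-i}(B_{i+1}, …, B_n; A_{i+1}, …, A_{n-1})`, so that expansion along the first
row gives `D i = B_{i+1} D (i+1) - A_{i+1}² D (i+2)`. If `D 0 = D 1 = 0`, then either `A_1 = 0` or
`D 1 = D 2 = 0`; the descent must stop at some `A_i = 0` because `D n = 1`. Conversely, `A_i = 0`
makes the matrix block diagonal, so that `D i` divides both `D 0` and `D 1`.
-/

section Determinant

variable {R : Type*} [CommRing R] {n : ℕ}

theorem det_eq_mul_of_succ_zero_eq_zero (M : Matrix (Fin (n + 1)) (Fin (n + 1)) R)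
    (hcol : ∀ i : Fin n, M i.succ 0 = 0) :
    M.det = M 0 0 * (M.submatrix Fin.succ Fin.succ).det := by
  simp [Matrix.det_succ_column_zero, Fin.sum_univ_succ, hcol]

theorem det_eq_sub_of_succ_succ_eq_zero (M : Matrix (Fin (n + 2)) (Fin (n + 2)) R)
    (hrow : ∀ j : Fin n, M 0 j.succ.succ = 0) (hcol : ∀ i : Fin n, M i.succ.succ 0 = 0) :
    M.det = M 0 0 * (M.submatrix Fin.succ Fin.succ).det
      - M 0 1 * M 1 0 *
        ((M.submatrix Fin.succ Fin.succ).submatrix Fin.succ Fin.succ).det := by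
  have minor_zero_one : (M.submatrix Fin.succ (Fin.succAbove 1)).det = M 1 0 *
      ((M.submatrix Fin.succ Fin.succ).submatrix Fin.succ Fin.succ).det := by
    have succAbove_comp_succ : Fin.succAbove 1 ∘ Fin.succ = (Fin.succ ∘ Fin.succ : Fin n → _) :=
      funext Fin.one_succAbove_succ
    rw [det_eq_mul_of_succ_zero_eq_zero _ (by simpa using hcol), Matrix.submatrix_submatrix,
      Matrix.submatrix_submatrix, succAbove_comp_succ]
    simp
  rw [Matrix.det_succ_row_zero, Fin.sum_univ_succ, Fin.sum_univ_succ]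
  simp only [Fin.val_zero, Fin.succ_zero_eq_one, Fin.val_one, Fin.succAbove_zero, hrow,
    minor_zero_one, pow_zero, pow_one, mul_zero, zero_mul, Finset.sum_const_zero]
  ring

end Determinant

section SymmTridiagonal

variable {R : Type*} [Zero R]

/-- The symmetric tridiagonal matrix of which `Qtri n B A` is the determinant. The index set `Fin n`
starts at `0` but `B` and `A` are read from index `1` on, so passing to the lower right block that
omits the first `i` rows and columns replaces `B` and `A` by `fun k => B (k + i)` and
`fun k => A (k + i)`. -/
def symmTridiagonal (n : ℕ) (B A : ℕ → R) : Matrix (Fin n) (Fin n) R :=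
  Matrix.of fun i j : Fin n =>
    if (i : ℕ) = (j : ℕ) then B ((i : ℕ) + 1)
    else if (i : ℕ) + 1 = (j : ℕ) then A ((i : ℕ) + 1)
    else if (j : ℕ) + 1 = (i : ℕ) then A ((j : ℕ) + 1)
    else 0

theorem symmTridiagonal_submatrix_succ (n : ℕ) (B A : ℕ → R) :
    (symmTridiagonal (n + 1) B A).submatrix Fin.succ Fin.succ =
      symmTridiagonal n (fun k => B (k + 1)) (fun k => A (k + 1)) := by
  ext i j
  simp [symmTridiagonal]

theorem symmTridiagonal_submatrix_finSumFinEquiv (m k : ℕ) (B A : ℕ → R) (hA : A m = 0) :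
    (symmTridiagonal (m + k) B A).submatrix finSumFinEquiv finSumFinEquiv =
      Matrix.fromBlocks (symmTridiagonal m B A) 0 0
        (symmTridiagonal k (fun j => B (j + m)) (fun j => A (j + m))) := by
  -- The only entries outside the two diagonal blocks that could be nonzero are the copies of `A m`.
  ext (i | i) (j | j) <;>
    simp only [symmTridiagonal, Matrix.submatrix_apply, finSumFinEquiv_apply_left,
      finSumFinEquiv_apply_right, Matrix.of_apply, Fin.val_castAdd, Fin.val_natAdd,
      Matrix.fromBlocks_apply₁₁, Matrix.fromBlocks_apply₁₂, Matrix.fromBlocks_apply₂₁,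
      Matrix.fromBlocks_apply₂₂, Matrix.zero_apply] <;>
    grind

end SymmTridiagonal

section Qtri

variable {R : Type} [CommRing R]

theorem det_symmTridiagonal (n : ℕ) (B A : ℕ → R) : (symmTridiagonal n B A).det = Qtri n B A :=
  rfl

theorem Qtri_zero (B A : ℕ → R) : Qtri 0 B A = 1 :=
  Matrix.det_fin_zero

theorem Qtri_add_two (n : ℕ) (B A : ℕ → R) :
    Qtri (n + 2) B A = B 1 * Qtri (n + 1) (fun k => B (k + 1)) (fun k => A (k + 1))
      - A 1 ^ 2 * Qtri n (fun k => B (k + 2)) (fun k => A (k + 2)) := by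
  rw [← det_symmTridiagonal, det_eq_sub_of_succ_succ_eq_zero _ (by simp [symmTridiagonal])
    (by simp [symmTridiagonal]), symmTridiagonal_submatrix_succ,
    symmTridiagonal_submatrix_succ]
  simp [symmTridiagonal, Qtri, sq]

theorem Qtri_add_eq_mul (m k : ℕ) (B A : ℕ → R) (hA : A m = 0) :
    Qtri (m + k) B A = Qtri m B A * Qtri k (fun j => B (j + m)) (fun j => A (j + m)) := by
  rw [← det_symmTridiagonal, ← Matrix.det_submatrix_equiv_self finSumFinEquiv,
    symmTridiagonal_submatrix_finSumFinEquiv m k B A hA, Matrix.det_fromBlocks_zero₁₂,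
    det_symmTridiagonal, det_symmTridiagonal]

theorem exists_offDiag_eq_zero_of_Qtri_eq_zero [IsDomain R] (n : ℕ) (B A : ℕ → R)
    (hQ : Qtri (n + 1) B A = 0)
    (hQ_tail : Qtri n (fun k => B (k + 1)) (fun k => A (k + 1)) = 0) :
    ∃ i, 1 ≤ i ∧ i ≤ n ∧ A i = 0 ∧
      Qtri (n + 1 - i) (fun k => B (k + i)) (fun k => A (k + i)) = 0 := by
  induction n generalizing B A with
  | zero => simp [Qtri_zero] at hQ_tail
  | succ n ih =>
    by_cases hA : A 1 = 0
    · exact ⟨1, le_rfl, by omega, hA, hQ_tail⟩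
    · have hQ_tail_tail : Qtri n (fun k => B (k + 2)) (fun k => A (k + 2)) = 0 := by
        simpa [Qtri_add_two, hQ_tail, hA] using hQ
      obtain ⟨i, one_le, le_n, hAi, hQi⟩ := ih _ _ hQ_tail hQ_tail_tail
      refine ⟨i + 1, by omega, by omega, hAi, ?_⟩
      rw [Nat.add_sub_add_right]
      exact hQi

end Qtri

/-- **Coordinate decomposition of `V(Q_n, Q_{n−1}(2))`** (eq. (11.54) of the paper).
Over an integral domain, for `n ≥ 2`:
`Q_n(B_1,…,B_n; A_1,…,A_{n−1}) = 0` and `Q_{n−1}(B_2,…,B_n; A_2,…,A_{n−1}) = 0` hold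
simultaneously iff there is `1 ≤ i ≤ n − 1` with `A_i = 0` and
`Q_{n−i}(B_{i+1},…,B_n; A_{i+1},…,A_{n−1}) = 0`. -/
theorem qtri_intersection_decomposition {R : Type} [CommRing R] [IsDomain R]
    (n : ℕ) (hn : 2 ≤ n) (B A : ℕ → R) :
    (Qtri n B A = 0 ∧ Qtri (n - 1) (fun k => B (k + 1)) (fun k => A (k + 1)) = 0) ↔
      ∃ i : ℕ, 1 ≤ i ∧ i ≤ n - 1 ∧ A i = 0 ∧
        Qtri (n - i) (fun k => B (k + i)) (fun k => A (k + i)) = 0 := by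
  constructor
  · rintro ⟨hQ, hQ_tail⟩
    obtain ⟨m, rfl⟩ : ∃ m, n = m + 1 := ⟨n - 1, by omega⟩
    exact exists_offDiag_eq_zero_of_Qtri_eq_zero m B A hQ hQ_tail
  · rintro ⟨i, one_le, le_pred, hA, hQ⟩
    obtain ⟨m, rfl⟩ : ∃ m, i = m + 1 := ⟨i - 1, by omega⟩
    obtain ⟨k, rfl⟩ : ∃ k, n = m + 1 + k := ⟨n - (m + 1), by omega⟩
    rw [Nat.add_sub_cancel_left] at hQ
    constructor
    · rw [Qtri_add_eq_mul _ _ _ _ hA, hQ, mul_zero]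
    · have hQ_shift : Qtri k (fun j => B (j + m + 1)) (fun j => A (j + m + 1)) = 0 := hQ
      rw [Nat.add_right_comm, Nat.add_sub_cancel, Qtri_add_eq_mul m k _ _ hA, hQ_shift, mul_zero]
end
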